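/- arXiv:2405.13893 — 6 statements merged into one kernel-verified Lean document; each statement's English description precedes it below -/
import Mathlib

section
/- Let k ≥ 2 and let G be the complete k-partite graph K_{n_1,...,n_k} with parts of sizes n_1, ..., n_k ≥ 1, where not all parts have size 1 (i.e., G is different from the complete graph K_k). Then lir(G) ≤ 2; that is, G admits a 2-liec. -/
/-- The number of edges of color `i` incident to `v`. -/
noncomputable def cdeg {V : Type*} (G : SimpleGraph V) (c : Sym2 V → Fin 2)
    (i : Fin 2) (v : V) : ℕ :=
  {w | G.Adj v w ∧ c s(v, w) = i}.ncard

/-- `c` is a locally irregular 2-edge-coloring (2-liec) of `G`: for every edge `uv`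
of color `i`, the numbers of color-`i` edges at `u` and at `v` differ. -/
def IsLiec2 {V : Type*} (G : SimpleGraph V) (c : Sym2 V → Fin 2) : Prop :=
  ∀ u v, G.Adj u v →
    cdeg G c (c s(u, v)) u ≠ cdeg G c (c s(u, v)) v

/-!
Color the union `S` of the largest parts first, then join the remaining parts to it one at a time,
in decreasing order of size, with alternating colors. When a part `P` is joined in color `i`, its
vertices get `i`-degree `#S`, while the `i`-degree of each `v ∈ S` becomes `#P + dᵢ(v)`; so the
join succeeds as soon as `#P + dᵢ(v) < #S` for all `v ∈ S`. This inequality then holds for the next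
part and the other color `j`, since `dⱼ(v)` is at most `#S` minus the size of the part of `v`.

To start, let `n ≥ 2` be the largest size of a part. If only one part has size `n`, take it as `S`.
If exactly two do, take their union and give color `0` to the star at one vertex. Otherwise take
three of them, `A`, `B`, `E`, and give color `0` to all edges between `A` and `B` and to one edge
from each vertex of `A` to `E`, not all of these ending in the same vertex of `E`: the
`0`-degrees are `n + 1` on `A`, `n` on `B` and less than `n` on `E`. In both cases `S` spans a
regular graph, so it is enough to distinguish the `0`-degrees of adjacent vertices.
-/

open Finset SimpleGraph

variable {V : Type*} {G : SimpleGraph V} [DecidableRel G.Adj] {c : Sym2 V → Fin 2}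
  {S T P : Finset V} {i j : Fin 2} {a b e u v w : V}

section CdegOn

variable (G) in
/-- The number of edges of color `i` from `v` to `S`; this is `cdeg` for the subgraph of `G`
induced on `S` when `v ∈ S`. -/
def cdegOn (c : Sym2 V → Fin 2) (S : Finset V) (i : Fin 2) (v : V) : ℕ :=
  #{w ∈ S | G.Adj v w ∧ c s(v, w) = i}

variable (G) in
/-- `c` restricts to a 2-liec of the subgraph of `G` induced on `S`. -/
def IsLiec2On (c : Sym2 V → Fin 2) (S : Finset V) : Prop :=
  ∀ u ∈ S, ∀ v ∈ S, G.Adj u v → cdegOn G c S (c s(u, v)) u ≠ cdegOn G c S (c s(u, v)) v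

lemma cdegOn_univ [Fintype V] : cdegOn G c univ i v = cdeg G c i v := by
  simp [cdegOn, cdeg, ← Set.ncard_coe_finset]

lemma IsLiec2On.isLiec2 [Fintype V] (h : IsLiec2On G c univ) : IsLiec2 G c := fun u v huv ↦ by
  simpa only [cdegOn_univ] using h u (mem_univ u) v (mem_univ v) huv

lemma cdegOn_add_cdegOn (hij : i ≠ j) :
    cdegOn G c S i v + cdegOn G c S j v = #{w ∈ S | G.Adj v w} := by
  have color_eq_iff (e : Sym2 V) : c e = j ↔ ¬c e = i := by omega
  simp only [cdegOn, color_eq_iff, ← filter_filter, card_filter_add_card_filter_not]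

end CdegOn

section Part

variable [Fintype V]

variable (G) in
/-- The vertices not adjacent to `v`, including `v` itself: if `G` is complete multipartite, this
is the part containing `v`. -/
def part (v : V) : Finset V := {w | ¬G.Adj v w}

variable (G) in
/-- `S` is a union of parts of the complete multipartite graph `G`. -/
def IsUnionOfParts (S : Finset V) : Prop := ∀ v ∈ S, part G v ⊆ S

lemma mem_part : w ∈ part G v ↔ ¬G.Adj v w := by simp [part]

lemma self_mem_part (v : V) : v ∈ part G v := by simp [mem_part]

lemma card_part_pos (v : V) : 0 < #(part G v) := card_pos.2 ⟨v, self_mem_part v⟩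

lemma part_eq_of_mem (hG : G.IsCompleteMultipartite) (hw : w ∈ part G v) :
    part G w = part G v := by
  ext x
  simp only [mem_part] at hw ⊢
  exact ⟨hG.trans _ _ _ hw, hG.trans _ _ _ fun h ↦ hw h.symm⟩

lemma not_adj_of_mem_part (hG : G.IsCompleteMultipartite) (hu : u ∈ part G a)
    (hv : v ∈ part G a) : ¬G.Adj u v :=
  mem_part.1 (part_eq_of_mem hG hu ▸ hv)

lemma notMem_part_of_mem_part (hG : G.IsCompleteMultipartite) (hab : G.Adj a b)
    (hu : u ∈ part G a) : u ∉ part G b := fun hub ↦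
  not_adj_of_mem_part hG (self_mem_part a) (part_eq_of_mem hG hu ▸
    part_eq_of_mem hG hub ▸ self_mem_part b) hab

lemma adj_of_mem_part (hG : G.IsCompleteMultipartite) (hab : G.Adj a b) (hu : u ∈ part G a)
    (hv : v ∈ part G b) : G.Adj u v :=
  not_not.1 fun huv ↦ notMem_part_of_mem_part hG hab hu <|
    part_eq_of_mem hG hv ▸ mem_part.2 fun hvu ↦ huv hvu.symm

lemma disjoint_part_part (hG : G.IsCompleteMultipartite) (hab : G.Adj a b) :
    Disjoint (part G a) (part G b) :=
  disjoint_left.2 fun _ ↦ notMem_part_of_mem_part hG hab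

lemma isUnionOfParts_part (hG : G.IsCompleteMultipartite) (v : V) :
    IsUnionOfParts G (part G v) := fun _ hw ↦ (part_eq_of_mem hG hw).subset

namespace IsUnionOfParts

lemma adj (hS : IsUnionOfParts G S) (hv : v ∈ S) (hw : w ∉ S) : G.Adj v w :=
  not_not.1 fun h ↦ hw (hS v hv (mem_part.2 h))

lemma union [DecidableEq V] (hS : IsUnionOfParts G S) (hT : IsUnionOfParts G T) :
    IsUnionOfParts G (S ∪ T) := fun v hv ↦
  (mem_union.1 hv).elim (fun h ↦ (hS v h).trans subset_union_left)
    fun h ↦ (hT v h).trans subset_union_right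

lemma disjoint_part (hS : IsUnionOfParts G S) (hG : G.IsCompleteMultipartite) (hw : w ∉ S) :
    Disjoint S (part G w) :=
  disjoint_left.2 fun v hv hvw ↦ hw (hS v hv (part_eq_of_mem hG hvw ▸ self_mem_part w))

lemma cdegOn_add_cdegOn_add_card_part (hS : IsUnionOfParts G S) (hij : i ≠ j) (hv : v ∈ S) :
    cdegOn G c S i v + cdegOn G c S j v + #(part G v) = #S := by
  have part_eq : part G v = {w ∈ S | ¬G.Adj v w} := by
    ext w
    simpa [mem_part] using fun h ↦ hS v hv (mem_part.2 h)
  rw [cdegOn_add_cdegOn hij, part_eq, card_filter_add_card_filter_not]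

lemma cdegOn_add_card_part_le (hS : IsUnionOfParts G S) (hv : v ∈ S) :
    cdegOn G c S i v + #(part G v) ≤ #S := by
  have := hS.cdegOn_add_cdegOn_add_card_part (c := c) (j := 1 - i) (i := i) (by omega) hv
  omega

/-- The two color degrees have the same sum at all vertices of `S`, so distinguishing vertices by
their `i`-degrees distinguishes them by their degrees in the other color. -/
lemma isLiec2On_of_card_part_eq (hS : IsUnionOfParts G S) {n : ℕ} (hn : ∀ v ∈ S, #(part G v) = n)
    (hne : ∀ u ∈ S, ∀ v ∈ S, G.Adj u v → cdegOn G c S i u ≠ cdegOn G c S i v) :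
    IsLiec2On G c S := by
  intro u hu v hv huv
  obtain hi | hi := eq_or_ne i (c s(u, v))
  · exact hi ▸ hne u hu v hv huv
  · have sum_u := hS.cdegOn_add_cdegOn_add_card_part (c := c) hi hu
    have sum_v := hS.cdegOn_add_cdegOn_add_card_part (c := c) hi hv
    have := hne u hu v hv huv
    rw [hn u hu] at sum_u
    rw [hn v hv] at sum_v
    omega

end IsUnionOfParts

end Part

section Coloring

variable [DecidableEq V] {A B : Finset V} {f : V → V}

/-- The edge coloring obtained from `c` by giving color `i` to all edges that meet `P`. -/
def recolor (c : Sym2 V → Fin 2) (P : Finset V) (i : Fin 2) : Sym2 V → Fin 2 :=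
  fun e ↦ if ∃ v ∈ P, v ∈ e then i else c e

lemma recolor_of_mem_left (hu : u ∈ P) : recolor c P i s(u, v) = i :=
  if_pos ⟨u, hu, Sym2.mem_mk_left u v⟩

lemma recolor_of_mem_right (hv : v ∈ P) : recolor c P i s(u, v) = i :=
  if_pos ⟨v, hv, Sym2.mem_mk_right u v⟩

lemma recolor_of_notMem (hu : u ∉ P) (hv : v ∉ P) : recolor c P i s(u, v) = c s(u, v) :=
  if_neg fun ⟨_, hw, hwe⟩ ↦ (Sym2.mem_iff.1 hwe).elim (fun h ↦ hu (h ▸ hw)) fun h ↦ hv (h ▸ hw)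

lemma cdegOn_recolor_of_mem (hv : v ∈ P) (hadj : ∀ w ∈ S, G.Adj v w)
    (hnadj : ∀ w ∈ P, ¬G.Adj v w) :
    cdegOn G (recolor c P i) (S ∪ P) j v = if i = j then #S else 0 := by
  simp only [cdegOn, recolor_of_mem_left hv, filter_union]
  rw [filter_false_of_mem (s := P) fun w hw h ↦ hnadj w hw h.1, union_empty]
  split_ifs with hij
  · rw [filter_true_of_mem fun w hw ↦ ⟨hadj w hw, hij⟩]
  · simp [hij]

lemma cdegOn_recolor_of_notMem (hv : v ∉ P) (hSP : Disjoint S P) (hadj : ∀ w ∈ P, G.Adj v w) :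
    cdegOn G (recolor c P i) (S ∪ P) j v = (if i = j then #P else 0) + cdegOn G c S j v := by
  have on_P : {w ∈ P | G.Adj v w ∧ recolor c P i s(v, w) = j} = if i = j then P else ∅ := by
    rw [filter_congr fun w hw ↦ by
      rw [recolor_of_mem_right hw, and_iff_right (hadj w hw)], filter_const]
  have on_S : {w ∈ S | G.Adj v w ∧ recolor c P i s(v, w) = j} =
      {w ∈ S | G.Adj v w ∧ c s(v, w) = j} :=
    filter_congr fun w hw ↦ by rw [recolor_of_notMem hv (disjoint_left.1 hSP hw)]
  rw [cdegOn, filter_union, card_union_of_disjoint (disjoint_filter_filter hSP), on_P, on_S,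
    add_comm, apply_ite card, card_empty, cdegOn]

/-- The edge coloring in which color `0` is the star at `b`. -/
def starColoring (b : V) : Sym2 V → Fin 2 := fun e ↦ if b ∈ e then 0 else 1

lemma starColoring_eq_zero_iff {e : Sym2 V} : starColoring b e = 0 ↔ b ∈ e := by
  simp [starColoring]

lemma cdegOn_starColoring_self : cdegOn G (starColoring b) S 0 b = #{w ∈ S | G.Adj b w} := by
  simp [cdegOn, starColoring_eq_zero_iff]

lemma cdegOn_starColoring_of_ne (hv : v ≠ b) :
    cdegOn G (starColoring b) S 0 v = if b ∈ S ∧ G.Adj v b then 1 else 0 := by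
  have leaves : {w ∈ S | G.Adj v w ∧ starColoring b s(v, w) = 0} =
      if b ∈ S ∧ G.Adj v b then {b} else ∅ := by
    ext w
    simp only [starColoring_eq_zero_iff, Sym2.mem_iff, mem_filter]
    grind
  rw [cdegOn, leaves, apply_ite card, card_singleton, card_empty]

/-- The edge coloring in which color `0` consists of all edges between `A` and `B` and the edges
from `x` to `f x` for `x ∈ A`. -/
def pairColoring (A B : Finset V) (f : V → V) : Sym2 V → Fin 2 :=
  fun e ↦ if ∃ x ∈ A, e = s(x, f x) ∨ ∃ y ∈ B, e = s(x, y) then 0 else 1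

lemma pairColoring_eq_zero_iff (hv : v ∉ A) :
    pairColoring A B f s(u, v) = 0 ↔ u ∈ A ∧ (v ∈ B ∨ v = f u) := by
  simp only [pairColoring, ite_eq_left_iff, one_ne_zero, imp_false, not_not]
  constructor
  · rintro ⟨x, hx, he | ⟨y, hy, he⟩⟩ <;>
      obtain ⟨rfl, rfl⟩ | ⟨rfl, rfl⟩ := Sym2.eq_iff.1 he
    exacts [⟨hx, .inr rfl⟩, absurd hx hv, ⟨hx, .inl hy⟩, absurd hx hv]
  · rintro ⟨hu, hvB | rfl⟩
    exacts [⟨u, hu, .inr ⟨v, hvB, rfl⟩⟩, ⟨u, hu, .inl rfl⟩]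

end Coloring

variable [Fintype V]

section Extension

variable (G) in
/-- A 2-liec `c` of the union `S` of the largest parts of `G` to which any further part can be
joined by edges of color `i`: the vertices of that part get `i`-degree `#S`, which by
`card_part_add_cdegOn_lt` exceeds the new `i`-degrees of the vertices of `S`. -/
structure IsExtendable (c : Sym2 V → Fin 2) (S : Finset V) (i : Fin 2) : Prop where
  nonempty : S.Nonempty
  isUnionOfParts : IsUnionOfParts G S
  isLiec2On : IsLiec2On G c S
  card_part_le : ∀ v ∈ S, ∀ w ∉ S, #(part G w) ≤ #(part G v)
  card_part_add_cdegOn_lt : ∀ v ∈ S, ∀ w ∉ S, #(part G w) + cdegOn G c S i v < #S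

lemma IsUnionOfParts.isExtendable_of_card_part_eq (hS : IsUnionOfParts G S) (hne : S.Nonempty)
    {n : ℕ} (hn : ∀ v ∈ S, #(part G v) = n) (hmax : ∀ w, #(part G w) ≤ n)
    (hdeg : ∀ u ∈ S, ∀ v ∈ S, G.Adj u v → cdegOn G c S i u ≠ cdegOn G c S i v)
    (hlt : ∀ v ∈ S, ∀ w ∉ S, #(part G w) + cdegOn G c S i v < #S) : IsExtendable G c S i where
  nonempty := hne
  isUnionOfParts := hS
  isLiec2On := hS.isLiec2On_of_card_part_eq hn hdeg
  card_part_le v hv w _ := hn v hv ▸ hmax w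
  card_part_add_cdegOn_lt := hlt

section Recolor

variable [DecidableEq V]

lemma IsUnionOfParts.cdegOn_recolor_part_of_mem (hS : IsUnionOfParts G S)
    (hG : G.IsCompleteMultipartite) (hw : w ∉ S) (hv : v ∈ S) :
    cdegOn G (recolor c (part G w) i) (S ∪ part G w) j v =
      (if i = j then #(part G w) else 0) + cdegOn G c S j v := by
  have hSP := hS.disjoint_part hG hw
  exact cdegOn_recolor_of_notMem (disjoint_left.1 hSP hv) hSP
    fun x hx ↦ hS.adj hv (disjoint_right.1 hSP hx)

lemma IsUnionOfParts.cdegOn_recolor_part_of_mem_part (hS : IsUnionOfParts G S)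
    (hG : G.IsCompleteMultipartite) (hw : w ∉ S) (hv : v ∈ part G w) :
    cdegOn G (recolor c (part G w) i) (S ∪ part G w) j v = if i = j then #S else 0 := by
  have hvS : v ∉ S := disjoint_right.1 (hS.disjoint_part hG hw) hv
  exact cdegOn_recolor_of_mem hv (fun x hx ↦ (hS.adj hx hvS).symm)
    fun x hx ↦ not_adj_of_mem_part hG hv hx

namespace IsExtendable

lemma isLiec2On_recolor (h : IsExtendable G c S i) (hG : G.IsCompleteMultipartite) (hw : w ∉ S) :
    IsLiec2On G (recolor c (part G w) i) (S ∪ part G w) := by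
  have hSP := h.isUnionOfParts.disjoint_part hG hw
  have degree_lt {x y : V} (hx : x ∈ S) (hy : y ∈ part G w) :
      cdegOn G (recolor c (part G w) i) (S ∪ part G w) i x <
        cdegOn G (recolor c (part G w) i) (S ∪ part G w) i y := by
    rw [h.isUnionOfParts.cdegOn_recolor_part_of_mem hG hw hx,
      h.isUnionOfParts.cdegOn_recolor_part_of_mem_part hG hw hy, if_pos rfl, if_pos rfl]
    exact h.card_part_add_cdegOn_lt x hx w hw
  intro u hu v hv huv
  obtain hu | hu := mem_union.1 hu <;> obtain hv | hv := mem_union.1 hv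
  · rw [recolor_of_notMem (disjoint_left.1 hSP hu) (disjoint_left.1 hSP hv),
      h.isUnionOfParts.cdegOn_recolor_part_of_mem hG hw hu,
      h.isUnionOfParts.cdegOn_recolor_part_of_mem hG hw hv]
    exact fun heq ↦ h.isLiec2On u hu v hv huv (Nat.add_left_cancel heq)
  · rw [recolor_of_mem_right hv]
    exact (degree_lt hu hv).ne
  · rw [recolor_of_mem_left hu]
    exact (degree_lt hv hu).ne'
  · exact absurd huv (not_adj_of_mem_part hG hu hv)

lemma recolor (h : IsExtendable G c S i) (hG : G.IsCompleteMultipartite) (hij : i ≠ j)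
    (hw : w ∉ S) (hmax : ∀ x ∉ S, #(part G x) ≤ #(part G w)) :
    IsExtendable G (recolor c (part G w) i) (S ∪ part G w) j where
  nonempty := h.nonempty.mono subset_union_left
  isUnionOfParts := h.isUnionOfParts.union (isUnionOfParts_part hG w)
  isLiec2On := h.isLiec2On_recolor hG hw
  card_part_le v hv x hx := by
    have hxS : x ∉ S := fun hxS ↦ hx (mem_union_left _ hxS)
    obtain hv | hv := mem_union.1 hv
    · exact h.card_part_le v hv x hxS
    · exact part_eq_of_mem hG hv ▸ hmax x hxS
  card_part_add_cdegOn_lt v hv x hx := by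
    have hxS : x ∉ S := fun hxS ↦ hx (mem_union_left _ hxS)
    rw [card_union_of_disjoint (h.isUnionOfParts.disjoint_part hG hw)]
    obtain hv | hv := mem_union.1 hv
    · rw [h.isUnionOfParts.cdegOn_recolor_part_of_mem hG hw hv, if_neg hij]
      have := h.card_part_le v hv x hxS
      have := h.isUnionOfParts.cdegOn_add_card_part_le (c := c) (i := j) hv
      have := card_part_pos (G := G) w
      omega
    · rw [h.isUnionOfParts.cdegOn_recolor_part_of_mem_part hG hw hv, if_neg hij]
      have := hmax x hxS
      have := h.nonempty.card_pos
      omega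

end IsExtendable

end Recolor

theorem IsExtendable.exists_isLiec2 (h : IsExtendable G c S i) (hG : G.IsCompleteMultipartite) :
    ∃ c : Sym2 V → Fin 2, IsLiec2 G c := by
  classical
  induction hd : #Sᶜ using Nat.strong_induction_on generalizing c S i with
  | _ d ih =>
    subst hd
    obtain hS | hS := Sᶜ.eq_empty_or_nonempty
    · rw [compl_eq_empty_iff] at hS
      exact ⟨c, (hS ▸ h.isLiec2On).isLiec2⟩
    · obtain ⟨w, hw, hmax⟩ := exists_max_image Sᶜ (fun x ↦ #(part G x)) hS
      simp only [mem_compl] at hw hmax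
      have card_lt : #(S ∪ part G w)ᶜ < #Sᶜ := card_lt_card <| compl_ssubset_compl.2 <|
        ssubset_of_subset_of_ne subset_union_left fun heq ↦
          hw (heq ▸ mem_union_right _ (self_mem_part w))
      exact ih _ card_lt (h.recolor hG (j := 1 - i) (by omega) hw hmax) rfl

end Extension

section LargestParts

lemma isExtendable_part (hG : G.IsCompleteMultipartite) (hmax : ∀ w, #(part G w) ≤ #(part G a))
    (hlt : ∀ w ∉ part G a, #(part G w) < #(part G a)) : IsExtendable G c (part G a) i := by
  have degree {v : V} (hv : v ∈ part G a) : cdegOn G c (part G a) i v = 0 :=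
    card_eq_zero.2 <| filter_false_of_mem fun w hw h ↦ not_adj_of_mem_part hG hv hw h.1
  refine (isUnionOfParts_part hG a).isExtendable_of_card_part_eq ⟨a, self_mem_part a⟩
    (fun v hv ↦ congrArg card (part_eq_of_mem hG hv)) hmax
    (fun u hu v hv huv ↦ absurd huv (not_adj_of_mem_part hG hu hv)) fun v hv w hw ↦ ?_
  rw [degree hv]
  exact hlt w hw

section DecidableEq

variable [DecidableEq V] {f : V → V}

lemma cdegOn_starColoring_of_mem_fst (hG : G.IsCompleteMultipartite) (hab : G.Adj a b)
    (hv : v ∈ part G a) : cdegOn G (starColoring b) (part G a ∪ part G b) 0 v = 1 := by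
  have hvb : G.Adj v b := adj_of_mem_part hG hab hv (self_mem_part b)
  rw [cdegOn_starColoring_of_ne hvb.ne, if_pos ⟨mem_union_right _ (self_mem_part b), hvb⟩]

lemma cdegOn_starColoring_of_mem_snd (hG : G.IsCompleteMultipartite) (hab : G.Adj a b)
    (hv : v ∈ part G b) : cdegOn G (starColoring b) (part G a ∪ part G b) 0 v =
      if v = b then #(part G a) else 0 := by
  split_ifs with hvb
  · rw [hvb, cdegOn_starColoring_self, filter_union, filter_true_of_mem fun w hw ↦
      (adj_of_mem_part hG hab hw (self_mem_part b)).symm, filter_false_of_mem fun w hw ↦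
      not_adj_of_mem_part hG (self_mem_part b) hw, union_empty]
  · rw [cdegOn_starColoring_of_ne hvb,
      if_neg fun h ↦ not_adj_of_mem_part hG hv (self_mem_part b) h.2]

lemma isExtendable_starColoring (hG : G.IsCompleteMultipartite)
    (hmax : ∀ w, #(part G w) ≤ #(part G a)) (htwo : 2 ≤ #(part G a)) (hab : G.Adj a b)
    (hb : #(part G b) = #(part G a))
    (hlt : ∀ w ∉ part G a ∪ part G b, #(part G w) < #(part G a)) :
    IsExtendable G (starColoring b) (part G a ∪ part G b) 0 := by
  have degree_ne {u v : V} (hu : u ∈ part G a) (hv : v ∈ part G b) :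
      cdegOn G (starColoring b) (part G a ∪ part G b) 0 u ≠
        cdegOn G (starColoring b) (part G a ∪ part G b) 0 v := by
    rw [cdegOn_starColoring_of_mem_fst hG hab hu, cdegOn_starColoring_of_mem_snd hG hab hv]
    split_ifs <;> omega
  have degree_le {v : V} (hv : v ∈ part G a ∪ part G b) :
      cdegOn G (starColoring b) (part G a ∪ part G b) 0 v ≤ #(part G a) := by
    obtain hv | hv := mem_union.1 hv
    · exact (cdegOn_starColoring_of_mem_fst hG hab hv).trans_le (one_le_two.trans htwo)
    · rw [cdegOn_starColoring_of_mem_snd hG hab hv]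
      split_ifs <;> omega
  refine ((isUnionOfParts_part hG a).union (isUnionOfParts_part hG b)).isExtendable_of_card_part_eq
    ⟨a, mem_union_left _ (self_mem_part a)⟩ (fun v hv ↦ ?_) hmax (fun u hu v hv huv ↦ ?_)
    fun v hv w hw ↦ ?_
  · obtain hv | hv := mem_union.1 hv <;> rw [part_eq_of_mem hG hv]
    exact hb
  · obtain hu | hu := mem_union.1 hu <;> obtain hv | hv := mem_union.1 hv
    · exact absurd huv (not_adj_of_mem_part hG hu hv)
    · exact degree_ne hu hv
    · exact (degree_ne hv hu).symm
    · exact absurd huv (not_adj_of_mem_part hG hu hv)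
  · rw [card_union_of_disjoint (disjoint_part_part hG hab), hb]
    exact add_lt_add_of_lt_of_le (hlt w hw) (degree_le hv)

lemma cdegOn_pairColoring_of_mem_fst (hG : G.IsCompleteMultipartite) (hab : G.Adj a b)
    (hae : G.Adj a e) (hbe : G.Adj b e) (hv : v ∈ part G a) (hf : f v ∈ part G e) :
    cdegOn G (pairColoring (part G a) (part G b) f) (part G a ∪ part G b ∪ part G e) 0 v =
      #(part G b) + 1 := by
  rw [← card_insert_of_notMem (notMem_part_of_mem_part hG hbe.symm hf), cdegOn]
  congr 1
  ext w
  have : w ∈ part G a → ¬G.Adj v w := not_adj_of_mem_part hG hv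
  have : w ∈ part G b → G.Adj v w := adj_of_mem_part hG hab hv
  have : G.Adj v (f v) := adj_of_mem_part hG hae hv hf
  have : w ∉ part G a → (pairColoring (part G a) (part G b) f s(v, w) = 0 ↔
    v ∈ part G a ∧ (w ∈ part G b ∨ w = f v)) := pairColoring_eq_zero_iff
  simp only [mem_filter, mem_union, mem_insert]
  grind

lemma cdegOn_pairColoring_of_mem_snd (hG : G.IsCompleteMultipartite) (hab : G.Adj a b)
    (hv : v ∈ part G b) :
    cdegOn G (pairColoring (part G a) (part G b) f) (part G a ∪ part G b ∪ part G e) 0 v =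
      #(part G a) := by
  rw [cdegOn]
  congr 1
  ext w
  have hva : v ∉ part G a := notMem_part_of_mem_part hG hab.symm hv
  have : w ∈ part G a → G.Adj v w := adj_of_mem_part hG hab.symm hv
  simp only [mem_filter, mem_union, Sym2.eq_swap (a := v), pairColoring_eq_zero_iff hva]
  grind

lemma cdegOn_pairColoring_of_mem_thd (hG : G.IsCompleteMultipartite) (hae : G.Adj a e)
    (hbe : G.Adj b e) (hv : v ∈ part G e) :
    cdegOn G (pairColoring (part G a) (part G b) f) (part G a ∪ part G b ∪ part G e) 0 v =
      #{x ∈ part G a | f x = v} := by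
  rw [cdegOn]
  congr 1
  ext w
  have hva : v ∉ part G a := notMem_part_of_mem_part hG hae.symm hv
  have hvb : v ∉ part G b := notMem_part_of_mem_part hG hbe.symm hv
  have : w ∈ part G a → G.Adj v w := adj_of_mem_part hG hae.symm hv
  simp only [mem_filter, mem_union, Sym2.eq_swap (a := v), pairColoring_eq_zero_iff hva]
  grind

lemma isExtendable_pairColoring (hG : G.IsCompleteMultipartite)
    (hmax : ∀ w, #(part G w) ≤ #(part G a)) (htwo : 2 ≤ #(part G a))
    (hab : G.Adj a b) (hae : G.Adj a e) (hbe : G.Adj b e)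
    (hb : #(part G b) = #(part G a)) (he : #(part G e) = #(part G a))
    (hf : ∀ v ∈ part G a, f v ∈ part G e) (hnonconst : ∀ z, ∃ x ∈ part G a, f x ≠ z) :
    IsExtendable G (pairColoring (part G a) (part G b) f)
      (part G a ∪ part G b ∪ part G e) 0 := by
  have hS : IsUnionOfParts G (part G a ∪ part G b ∪ part G e) :=
    ((isUnionOfParts_part hG a).union (isUnionOfParts_part hG b)).union (isUnionOfParts_part hG e)
  have card_S : #(part G a ∪ part G b ∪ part G e) = 3 * #(part G a) := by
    rw [card_union_of_disjoint (disjoint_union_left.2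
      ⟨disjoint_part_part hG hae, disjoint_part_part hG hbe⟩),
      card_union_of_disjoint (disjoint_part_part hG hab), hb, he]
    ring
  have degree_fst {v : V} (hv : v ∈ part G a) :=
    cdegOn_pairColoring_of_mem_fst hG hab hae hbe hv (hf v hv)
  have degree_snd {v : V} (hv : v ∈ part G b) :=
    cdegOn_pairColoring_of_mem_snd (f := f) (e := e) hG hab hv
  have degree_thd {v : V} (hv : v ∈ part G e) :
      cdegOn G (pairColoring (part G a) (part G b) f) (part G a ∪ part G b ∪ part G e) 0 v <
        #(part G a) := by
    rw [cdegOn_pairColoring_of_mem_thd hG hae hbe hv]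
    exact card_lt_card (filter_ssubset.2 (hnonconst v))
  have mem_S {v : V} (hv : v ∈ part G a ∪ part G b ∪ part G e) :
      v ∈ part G a ∨ v ∈ part G b ∨ v ∈ part G e := by
    simpa only [mem_union, or_assoc] using hv
  refine hS.isExtendable_of_card_part_eq ⟨e, mem_union_right _ (self_mem_part e)⟩
    (fun v hv ↦ ?_) hmax (fun u hu v hv huv ↦ ?_) fun v hv w _ ↦ ?_
  · obtain hv | hv | hv := mem_S hv <;> rw [part_eq_of_mem hG hv]
    exacts [hb, he]
  · have not_same {x : V} (hux : u ∈ part G x) (hvx : v ∈ part G x) : False :=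
      not_adj_of_mem_part hG hux hvx huv
    grind
  · have := hmax w
    grind

end DecidableEq

lemma exists_isExtendable_of_three_largest_parts (hG : G.IsCompleteMultipartite)
    (hmax : ∀ w, #(part G w) ≤ #(part G a)) (htwo : 2 ≤ #(part G a)) (hab : G.Adj a b)
    (hae : G.Adj a e) (hbe : G.Adj b e) (hb : #(part G b) = #(part G a))
    (he : #(part G e) = #(part G a)) : ∃ c S, IsExtendable G c S 0 := by
  classical
  obtain ⟨a', ha', haa'⟩ := exists_mem_ne htwo a
  obtain ⟨e', he', hee'⟩ := exists_mem_ne (he ▸ htwo) e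
  let f : V → V := fun x ↦ if x = a then e else e'
  have hf (v : V) (_ : v ∈ part G a) : f v ∈ part G e := by
    dsimp only [f]
    split_ifs
    exacts [self_mem_part e, he']
  refine ⟨_, _, isExtendable_pairColoring hG hmax htwo hab hae hbe hb he hf fun z ↦ ?_⟩
  obtain rfl | hz := eq_or_ne e z
  · exact ⟨a', ha', by simpa only [f, if_neg haa'] using hee'⟩
  · exact ⟨a, self_mem_part a, by simpa only [f, if_true] using hz⟩

end LargestParts

theorem lir_complete_multipartite_general {V : Type*} [Finite V] {G : SimpleGraph V}
    (hG : G.IsCompleteMultipartite) (hne : G ≠ ⊤) : ∃ c : Sym2 V → Fin 2, IsLiec2 G c := by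
  classical
  have := Fintype.ofFinite V
  obtain ⟨x, y, hxy, hnadj⟩ := ne_top_iff_exists_not_adj.1 hne
  obtain ⟨a, -, hmax⟩ := exists_max_image univ (fun v ↦ #(part G v)) ⟨x, mem_univ x⟩
  replace hmax (w : V) := hmax w (mem_univ w)
  have htwo : 2 ≤ #(part G a) := le_trans
    (one_lt_card.2 ⟨x, self_mem_part x, y, mem_part.2 hnadj, hxy⟩) (hmax x)
  by_cases hone : ∀ w ∉ part G a, #(part G w) < #(part G a)
  · exact (isExtendable_part (c := fun _ ↦ 0) (i := 0) hG hmax hone).exists_isLiec2 hG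
  push Not at hone
  obtain ⟨b, hb, hbcard⟩ := hone
  by_cases hpair : ∀ w ∉ part G a ∪ part G b, #(part G w) < #(part G a)
  · exact (isExtendable_starColoring hG hmax htwo (not_not.1 (mem_part.not.1 hb))
      ((hmax b).antisymm hbcard) hpair).exists_isLiec2 hG
  push Not at hpair
  obtain ⟨e, he, hecard⟩ := hpair
  simp only [mem_union, mem_part, not_or, not_not] at hb he
  obtain ⟨c, S, h⟩ := exists_isExtendable_of_three_largest_parts hG hmax htwo hb he.1 he.2
    ((hmax b).antisymm hbcard) ((hmax e).antisymm hecard)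
  exact h.exists_isLiec2 hG

/-- Every complete `k`-partite graph (`k ≥ 2`) with all parts nonempty which is not a
complete graph (i.e. some part has at least two vertices) admits a 2-liec, so its
locally irregular chromatic index is at most 2. -/
theorem lir_complete_multipartite (k : ℕ) (hk : 2 ≤ k) (n : Fin k → ℕ)
    (hpos : ∀ i, 1 ≤ n i) (hnotK : ∃ i, 2 ≤ n i) :
    ∃ c : Sym2 (Σ i : Fin k, Fin (n i)) → Fin 2,
      IsLiec2 (SimpleGraph.completeMultipartiteGraph (fun i : Fin k => Fin (n i))) c := by
  obtain ⟨i, hi⟩ := hnotK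
  exact lir_complete_multipartite_general (completeMultipartiteGraph.isCompleteMultipartite _) <|
    ne_top_iff_exists_not_adj.2 ⟨⟨i, 0, by omega⟩, ⟨i, 1, hi⟩, by simp, by simp⟩
end

section
/- Let n ≥ 4. Then D_lir(K_n) = 2 if 6 ≤ n ≤ 10, and D_lir(K_n) = 1 otherwise (i.e., for n ∈ {4, 5} and for n ≥ 11). Concretely: the complete graph K_n admits a valid doubling-coloring (D, c) with |D| equal to the stated value, and admits none with |D| strictly smaller. -/
open Finset
open scoped Classical

/-- The weighted degree of vertex `v` in color `i`: each edge incident to `v` colored `i`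
counts 2 if it is doubled (lies in `D`) and 1 otherwise. -/
noncomputable def wdeg {V : Type*} [Fintype V] (G : SimpleGraph V)
    (D : Finset (Sym2 V)) (c : Sym2 V → Fin 2) (i : Fin 2) (v : V) : ℕ :=
  ∑ w ∈ Finset.univ.filter (fun w => G.Adj v w ∧ c s(v, w) = i),
    (if s(v, w) ∈ D then 2 else 1)

/-- `(D, c)` is a valid doubling-coloring of `G`. -/
def ValidDC {V : Type*} [Fintype V] (G : SimpleGraph V)
    (D : Finset (Sym2 V)) (c : Sym2 V → Fin 2) : Prop :=
  ↑D ⊆ G.edgeSet ∧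
    ∀ u v, G.Adj u v →
      wdeg G D c (c s(u, v)) u ≠ wdeg G D c (c s(u, v)) v

/-! Passing to the color of the doubled edges, a valid doubling-coloring of a complete graph
becomes a graph `H` with a subgraph `D` such that doubling `D` makes `H` locally irregular, while
vertices of equal degree in `H` are always adjacent.

Adding alternately isolated and universal vertices preserves this situation. Starting from graphs on
4, 6 and 11 vertices, it yields all the colorings.

If `D` is empty, then all degrees of `H` are distinct, which is impossible. If `D` is a single edge
`xy`, then the degrees of the vertices other than `x` and `y` are distinct. After the removal of
isolated and universal vertices they are `1, …, k`, and counting, as in the Erdős–Gallai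
inequalities, the edges between the upper and the lower half of these vertices leaves only `k = 2`
in the range `k ≤ 8`. From there, at most one isolated vertex and no universal one can be put back,
so that `n ≤ 5` whenever `n ≤ 10`. -/

open SimpleGraph

variable {V : Type*} [Fintype V]

/-- `H` is the graph of the first color and `D ≤ H` its set of doubled edges: doubling the edges
of `D` makes `H` locally irregular, while the complement `Hᶜ`, the graph of the second color, is
already locally irregular. The latter is expressed through degrees in `H`. -/
structure IsIrregularDoubling (H D : SimpleGraph V) [DecidableRel H.Adj] [DecidableRel D.Adj] :
    Prop where
  le : D ≤ H
  degree_add_ne : ∀ ⦃u v⦄, H.Adj u v → H.degree u + D.degree u ≠ H.degree v + D.degree v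
  degree_ne : ∀ ⦃u v⦄, u ≠ v → ¬H.Adj u v → H.degree u ≠ H.degree v

/-- The graph formed by the edges of color `i` in a coloring of the edges of a complete graph. -/
def colorGraph {V : Type*} (c : Sym2 V → Fin 2) (i : Fin 2) : SimpleGraph V :=
  fromEdgeSet (c ⁻¹' {i})

lemma colorGraph_adj {V : Type*} {c : Sym2 V → Fin 2} {i : Fin 2} {u v : V} :
    (colorGraph c i).Adj u v ↔ c s(u, v) = i ∧ u ≠ v := by
  simp [colorGraph]

lemma colorGraph_eq_compl {V : Type*} (c : Sym2 V → Fin 2) {i j : Fin 2} (hij : j ≠ i) :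
    colorGraph c j = (colorGraph c i)ᶜ := by
  ext u v
  simp only [colorGraph_adj, compl_adj]
  grind

lemma wdeg_top (D : Finset (Sym2 V)) (c : Sym2 V → Fin 2) (i : Fin 2) (v : V) :
    wdeg ⊤ D c i v =
      (colorGraph c i).degree v + (colorGraph c i ⊓ fromEdgeSet (D : Set (Sym2 V))).degree v := by
  have hsum : ∀ s : Finset V, ∑ w ∈ s, (if s(v, w) ∈ D then 2 else 1) =
      #s + #{w ∈ s | s(v, w) ∈ D} := fun s => by
    rw [card_filter, card_eq_sum_ones, ← sum_add_distrib]
    exact sum_congr rfl fun w _ => by split_ifs <;> rfl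
  rw [wdeg, hsum, filter_filter]
  simp only [← card_neighborFinset_eq_degree, neighborFinset_eq_filter]
  congr 2 <;> ext w <;> simp [colorGraph_adj] <;> tauto

lemma wdeg_top_of_forall_eq {D : Finset (Sym2 V)} {c : Sym2 V → Fin 2} {i : Fin 2}
    (hD : ∀ e ∈ D, c e = i) (v : V) :
    wdeg ⊤ D c i v = (colorGraph c i).degree v + (fromEdgeSet (D : Set (Sym2 V))).degree v := by
  rw [wdeg_top]
  congr! 2
  exact inf_eq_right.2 (fromEdgeSet_mono hD)

lemma wdeg_top_of_forall_ne {D : Finset (Sym2 V)} {c : Sym2 V → Fin 2} {i : Fin 2}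
    (hD : ∀ e ∈ D, c e ≠ i) (v : V) : wdeg ⊤ D c i v = (colorGraph c i).degree v := by
  rw [wdeg_top, Nat.add_eq_left, degree_eq_zero]
  intro w hw
  simp only [inf_adj, colorGraph_adj, fromEdgeSet_adj] at hw
  exact hD _ hw.2.1 hw.1.1

theorem validDC_top_iff {D : Finset (Sym2 V)} {c : Sym2 V → Fin 2} {i : Fin 2}
    (hDtop : (D : Set (Sym2 V)) ⊆ (⊤ : SimpleGraph V).edgeSet) (hD : ∀ e ∈ D, c e = i) :
    ValidDC ⊤ D c ↔ IsIrregularDoubling (colorGraph c i) (fromEdgeSet (D : Set (Sym2 V))) := by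
  have hne {j : Fin 2} (hj : j ≠ i) (u v : V) :
      wdeg ⊤ D c j u ≠ wdeg ⊤ D c j v ↔
        (colorGraph c i).degree u ≠ (colorGraph c i).degree v := by
    have hdeg (w : V) : wdeg ⊤ D c j w = Fintype.card V - 1 - (colorGraph c i).degree w := by
      rw [wdeg_top_of_forall_ne (fun e he => (hD e he).trans_ne hj.symm), ← degree_compl]
      congr!
      exact colorGraph_eq_compl c hj
    have hu := (colorGraph c i).degree_lt_card_verts u
    have hv := (colorGraph c i).degree_lt_card_verts v
    rw [hdeg, hdeg]
    omega
  constructor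
  · rintro ⟨-, hvalid⟩
    refine ⟨fromEdgeSet_mono hD, fun u v huv => ?_, fun u v huv hnadj => ?_⟩
    · obtain ⟨hc, huv⟩ := colorGraph_adj.1 huv
      simpa only [hc, wdeg_top_of_forall_eq hD] using hvalid u v huv
    · exact (hne (fun hc => hnadj (colorGraph_adj.2 ⟨hc, huv⟩)) u v).1 (hvalid u v huv)
  · refine fun h => ⟨hDtop, fun u v huv => ?_⟩
    by_cases hc : c s(u, v) = i
    · simpa only [hc, wdeg_top_of_forall_eq hD] using
        h.degree_add_ne (colorGraph_adj.2 ⟨hc, huv⟩)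
    · exact (hne hc u v).2 (h.degree_ne huv fun hadj => hc (colorGraph_adj.1 hadj).1)

theorem IsIrregularDoubling.exists_validDC {H D : SimpleGraph V} [DecidableRel H.Adj]
    [DecidableRel D.Adj] (h : IsIrregularDoubling H D) :
    ∃ (E : Finset (Sym2 V)) (c : Sym2 V → Fin 2), ValidDC ⊤ E c ∧ #E = #D.edgeFinset := by
  let c : Sym2 V → Fin 2 := fun e => if e ∈ H.edgeSet then 0 else 1
  have hcolor : colorGraph c 0 = H := by
    ext u v
    simpa [colorGraph_adj, c] using fun h : H.Adj u v => h.ne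
  have hdouble : fromEdgeSet (D.edgeFinset : Set (Sym2 V)) = D := by simp
  refine ⟨D.edgeFinset, c, (validDC_top_iff (i := 0) ?_ ?_).2 ?_, rfl⟩
  · simpa only [coe_edgeFinset] using edgeSet_mono le_top
  · intro e he
    exact if_pos (edgeSet_mono h.le (mem_edgeFinset.1 he))
  · convert h

/-- The graph `G` on the vertices `1, …, n` together with a new vertex `0`, which is joined to all
of them if `p` holds and to none of them otherwise. -/
def addVertex {n : ℕ} (G : SimpleGraph (Fin n)) (p : Prop) : SimpleGraph (Fin (n + 1)) where
  Adj := Fin.cons (Fin.cons False fun _ => p) fun u => Fin.cons p (G.Adj u)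
  symm := ⟨by
    intro u v
    cases u using Fin.cases <;> cases v using Fin.cases <;> simp [G.adj_comm]⟩
  loopless := ⟨by
    intro u
    cases u using Fin.cases <;> simp⟩

section AddVertex

variable {n : ℕ} (G : SimpleGraph (Fin n)) (p : Prop)

@[simp] lemma addVertex_adj_zero_succ (v : Fin n) : (addVertex G p).Adj 0 v.succ ↔ p := Iff.rfl

@[simp] lemma addVertex_adj_succ_zero (v : Fin n) : (addVertex G p).Adj v.succ 0 ↔ p := Iff.rfl

@[simp] lemma addVertex_adj_succ_succ (u v : Fin n) :
    (addVertex G p).Adj u.succ v.succ ↔ G.Adj u v := Iff.rfl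

lemma addVertex_degree_zero : (addVertex G p).degree 0 = if p then n else 0 := by
  rw [← Nat.cast_id (degree _ _), degree_eq_sum_if_adj, Fin.sum_univ_succ]
  simp

lemma addVertex_degree_succ [DecidableRel G.Adj] (v : Fin n) :
    (addVertex G p).degree v.succ = (if p then 1 else 0) + G.degree v := by
  rw [← Nat.cast_id (degree _ _), degree_eq_sum_if_adj, Fin.sum_univ_succ,
    ← Nat.cast_id (degree G v), degree_eq_sum_if_adj]
  simp

lemma card_edgeFinset_addVertex_false [DecidableRel G.Adj] :
    #(addVertex G False).edgeFinset = #G.edgeFinset := by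
  have hadd := (addVertex G False).sum_degrees_eq_twice_card_edges
  have hG := G.sum_degrees_eq_twice_card_edges
  simp only [Fin.sum_univ_succ, addVertex_degree_zero, addVertex_degree_succ, if_false,
    zero_add] at hadd
  omega

end AddVertex

section Extension

variable {n : ℕ} {H D : SimpleGraph (Fin n)} [DecidableRel H.Adj] [DecidableRel D.Adj]

lemma IsIrregularDoubling.addVertex (h : IsIrregularDoubling H D) {p : Prop}
    (hisolated : ¬p → ∀ v, 0 < H.degree v) (huniversal : p → ∀ v, H.degree v + D.degree v + 1 ≠ n) :
    IsIrregularDoubling (addVertex H p) (addVertex D False) where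
  le u v := by
    have hle (u v) : D.Adj u v → H.Adj u v := @h.le u v
    cases u using Fin.cases <;> cases v using Fin.cases <;> simp +contextual [hle]
  degree_add_ne u v := by
    cases u using Fin.cases <;> cases v using Fin.cases <;>
      simp only [addVertex_degree_zero, addVertex_degree_succ, addVertex_adj_zero_succ,
        addVertex_adj_succ_zero, addVertex_adj_succ_succ] <;>
      grind [h.degree_add_ne, SimpleGraph.irrefl]
  degree_ne u v := by
    cases u using Fin.cases <;> cases v using Fin.cases <;>
      simp only [addVertex_degree_zero, addVertex_degree_succ, addVertex_adj_zero_succ,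
        addVertex_adj_succ_zero, addVertex_adj_succ_succ] <;>
      grind [h.degree_ne]

/-- An irregular doubling to which an isolated vertex and then a universal one can be added, over
and over again. -/
structure IsExtendable_s9 {n : ℕ} (H D : SimpleGraph (Fin n)) [DecidableRel H.Adj]
    [DecidableRel D.Adj] : Prop extends IsIrregularDoubling H D where
  degree_pos : ∀ v, 0 < H.degree v
  degree_add_degree_lt : ∀ v, H.degree v + D.degree v < n

lemma IsExtendable_s9.addVertex_false (h : IsExtendable_s9 H D) :
    IsIrregularDoubling (addVertex H False) (addVertex D False) :=
  h.toIsIrregularDoubling.addVertex (fun _ => h.degree_pos) False.elim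

lemma IsExtendable_s9.addVertex_true [NeZero n] (h : IsExtendable_s9 H D) :
    IsExtendable_s9 (addVertex (addVertex H False) True) (addVertex (addVertex D False) False) where
  toIsIrregularDoubling := h.addVertex_false.addVertex (fun hp => (hp trivial).elim) fun _ v => by
    cases v using Fin.cases with
    | zero => simp [addVertex_degree_zero, NeZero.ne]
    | succ v => grind [addVertex_degree_succ, h.degree_add_degree_lt v]
  degree_pos v := by
    cases v using Fin.cases <;> simp [addVertex_degree_zero, addVertex_degree_succ]
  degree_add_degree_lt v := by
    cases v using Fin.cases with
    | zero => simp [addVertex_degree_zero]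
    | succ v =>
      rw [addVertex_degree_succ, addVertex_degree_succ]
      cases v using Fin.cases with
      | zero => simp [addVertex_degree_zero]
      | succ v => grind [addVertex_degree_succ, h.degree_add_degree_lt v]

theorem IsExtendable_s9.exists_validDC [NeZero n] (h : IsExtendable_s9 H D) {m : ℕ} (hm : n ≤ m) :
    ∃ (E : Finset (Sym2 (Fin m))) (c : Sym2 (Fin m) → Fin 2),
      ValidDC ⊤ E c ∧ #E = #D.edgeFinset := by
  induction hm' : m - n using Nat.twoStepInduction generalizing n with
  | zero =>
    obtain rfl : n = m := by omega
    exact h.toIsIrregularDoubling.exists_validDC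
  | one =>
    obtain rfl : n + 1 = m := by omega
    simpa only [card_edgeFinset_addVertex_false] using h.addVertex_false.exists_validDC
  | more k ih _ =>
    simpa only [card_edgeFinset_addVertex_false] using
      ih h.addVertex_true (by omega) (by omega)

end Extension

section BaseCases

lemma isIrregularDoubling_four :
    IsIrregularDoubling (fromEdgeSet {s(0, 1), s(0, 2), s(1, 2), s(1, 3)} : SimpleGraph (Fin 4))
      (fromEdgeSet {s(0, 1)}) where
  le := fromEdgeSet_mono (by simp)
  degree_add_ne := by decide +kernel
  degree_ne := by decide +kernel

lemma isExtendable_six :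
    IsExtendable_s9 (fromEdgeSet
      {s(0, 1), s(0, 4), s(0, 5), s(1, 2), s(1, 4), s(2, 3), s(3, 4)} : SimpleGraph (Fin 6))
      (fromEdgeSet {s(0, 1), s(1, 2)}) where
  le := fromEdgeSet_mono (by simp [Set.insert_subset_iff])
  degree_add_ne := by decide +kernel
  degree_ne := by decide +kernel
  degree_pos := by decide +kernel
  degree_add_degree_lt := by decide +kernel

-- Vertex `i` has degree `i` for `1 ≤ i ≤ 9`; the vertices `0` and `10` have degrees 5 and 6.
lemma isExtendable_eleven :
    IsExtendable_s9 (fromRel fun i j : Fin 11 => j ∈ (![{5, 7, 8, 9, 10}, {10}, {9, 10}, {7, 8, 9},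
        {6, 7, 8, 9}, {6, 7, 8, 9}, {7, 8, 9, 10}, {8, 9}, {9, 10}, {10}, ∅] i : Finset (Fin 11)))
      (fromEdgeSet {s(0, 10)}) where
  le := fun u v => by decide +revert +kernel
  degree_add_ne := by decide +kernel
  degree_ne := by decide +kernel
  degree_pos := by decide +kernel
  degree_add_degree_lt := by decide +kernel

end BaseCases

theorem exists_validDC_card_eq {n : ℕ} (hn : 4 ≤ n) :
    ∃ (D : Finset (Sym2 (Fin n))) (c : Sym2 (Fin n) → Fin 2),
      ValidDC ⊤ D c ∧ #D = if 6 ≤ n ∧ n ≤ 10 then 2 else 1 := by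
  obtain hn4 | hn5 | hn6 | hn11 : n = 4 ∨ n = 5 ∨ (6 ≤ n ∧ n ≤ 10) ∨ 11 ≤ n := by omega
  · subst hn4
    obtain ⟨D, c, hDc, hD⟩ := isIrregularDoubling_four.exists_validDC
    exact ⟨D, c, hDc, hD.trans (by decide +kernel)⟩
  · subst hn5
    obtain ⟨D, c, hDc, hD⟩ := (isIrregularDoubling_four.addVertex (p := False)
      (fun _ => by decide +kernel) False.elim).exists_validDC
    rw [card_edgeFinset_addVertex_false] at hD
    exact ⟨D, c, hDc, hD.trans (by decide +kernel)⟩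
  · obtain ⟨D, c, hDc, hD⟩ := isExtendable_six.exists_validDC hn6.1
    rw [if_pos hn6]
    exact ⟨D, c, hDc, hD.trans (by decide +kernel)⟩
  · obtain ⟨D, c, hDc, hD⟩ := isExtendable_eleven.exists_validDC hn11
    rw [if_neg fun hn10 => by omega]
    exact ⟨D, c, hDc, hD.trans (by decide +kernel)⟩

section Nonempty

lemma degree_not_injective [Nontrivial V] (G : SimpleGraph V) [DecidableRel G.Adj] :
    ¬Function.Injective fun v => G.degree v := by
  intro hinj
  have himage : univ.image (fun v => G.degree v) = range (Fintype.card V) := by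
    refine eq_of_subset_of_card_le (fun d hd => ?_) ?_
    · obtain ⟨v, -, rfl⟩ := mem_image.1 hd
      exact mem_range.2 (G.degree_lt_card_verts v)
    · rw [card_image_of_injective _ hinj, card_range, card_univ]
  have hpos := Fintype.card_pos (α := V)
  obtain ⟨u, -, hu⟩ := mem_image.1 (himage ▸ mem_range.2 hpos)
  obtain ⟨v, -, hv⟩ := mem_image.1 (himage ▸ mem_range.2 (Nat.sub_one_lt hpos.ne'))
  exact ((G.degree_eq_card_sub_one v).1 hv).not_isIsolated u ((G.degree_eq_zero u).1 hu)

theorem ValidDC.one_le_card [Nontrivial V] {D : Finset (Sym2 V)} {c : Sym2 V → Fin 2}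
    (h : ValidDC ⊤ D c) : 1 ≤ #D := by
  rw [Finset.one_le_card, nonempty_iff_ne_empty]
  rintro rfl
  have hirr := (validDC_top_iff (i := 0) h.1 (by simp)).1 h
  refine degree_not_injective (colorGraph c 0) fun u v huv => ?_
  by_contra hne
  by_cases hadj : (colorGraph c 0).Adj u v
  · exact hirr.degree_add_ne hadj (by simp [huv])
  · exact hirr.degree_ne hne hadj huv

end Nonempty

section Counting

lemma sum_Ioc_add_eq (a b : ℕ) : ∑ i ∈ Ioc a (b + a), i = b * a + ∑ i ∈ Ioc 0 b, i := by
  induction b with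
  | zero => simp
  | succ b ih =>
    rw [Nat.add_right_comm, sum_Ioc_succ_top (Nat.le_add_left a b), sum_Ioc_succ_top b.zero_le, ih]
    ring

lemma degree_eq_add_card_filter (G : SimpleGraph V) [DecidableRel G.Adj] {T B : Finset V}
    (hTB : Disjoint T B) (v : V) :
    G.degree v = #{w ∈ T | G.Adj v w} + #{w ∈ B | G.Adj v w} + #{w ∈ (T ∪ B)ᶜ | G.Adj v w} := by
  rw [← card_union_of_disjoint (disjoint_filter_filter hTB), ← filter_union,
    ← card_union_of_disjoint (disjoint_filter_filter disjoint_compl_right), ← filter_union,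
    union_compl, ← neighborFinset_eq_filter, card_neighborFinset_eq_degree]

lemma sum_degree_add_sum_card_le (G : SimpleGraph V) [DecidableRel G.Adj] {T B : Finset V}
    (hTB : Disjoint T B) :
    ∑ v ∈ T, G.degree v + ∑ z ∈ (T ∪ B)ᶜ, #{w ∈ B | G.Adj z w} ≤
      #T * (#T - 1) + ∑ v ∈ B, G.degree v + ∑ z ∈ (T ∪ B)ᶜ, #{w ∈ T | G.Adj z w} := by
  have hcomm (S S' : Finset V) :
      ∑ v ∈ S, #{w ∈ S' | G.Adj v w} = ∑ v ∈ S', #{w ∈ S | G.Adj v w} := by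
    simpa only [bipartiteAbove, bipartiteBelow, G.adj_comm] using
      sum_card_bipartiteAbove_eq_sum_card_bipartiteBelow (s := S) (t := S') G.Adj
  have hinside : ∑ v ∈ T, #{w ∈ T | G.Adj v w} ≤ #T * (#T - 1) := by
    refine sum_le_card_nsmul _ _ _ fun v hv => ?_
    rw [← card_erase_of_mem hv]
    exact card_le_card fun w hw => by
      rw [mem_filter] at hw
      exact mem_erase.2 ⟨hw.2.ne', hw.1⟩
  simp only [degree_eq_add_card_filter G hTB, sum_add_distrib]
  have := hcomm T B
  have := hcomm T (T ∪ B)ᶜ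
  have := hcomm B (T ∪ B)ᶜ
  omega

end Counting

section SingleEdge

variable {H : SimpleGraph V} [DecidableRel H.Adj] {x y : V}

lemma degree_edge (hxy : x ≠ y) (v : V) :
    (edge x y).degree v = if v ∈ ({x, y} : Finset V) then 1 else 0 := by
  rw [← card_neighborFinset_eq_degree, neighborFinset_eq_filter]
  split_ifs with hv
  · obtain rfl | rfl : v = x ∨ v = y := by simpa using hv
    · exact card_eq_one.2 ⟨y, by ext; grind⟩
    · exact card_eq_one.2 ⟨x, by ext; grind⟩
  · exact card_eq_zero.2 (by ext; grind)

namespace IsIrregularDoubling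

lemma adj_of_degree_eq {D : SimpleGraph V} [DecidableRel D.Adj]
    (h : IsIrregularDoubling H D) {u v : V} (huv : u ≠ v)
    (hdeg : H.degree u = H.degree v) : H.Adj u v :=
  not_not.1 fun hadj => h.degree_ne huv hadj hdeg

variable (h : IsIrregularDoubling H (edge x y)) (hxy : x ≠ y)

include h hxy

lemma adj_edge : H.Adj x y :=
  h.le (by simp [edge_adj, hxy])

lemma injOn_degree : Set.InjOn (fun v => H.degree v) (({x, y}ᶜ : Finset V) : Set V) := by
  intro u hu v hv huv
  by_contra hne
  apply h.degree_add_ne (h.adj_of_degree_eq hne huv)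
  simp_all [degree_edge]

lemma degree_ne_degree : H.degree x ≠ H.degree y := by
  simpa [degree_edge hxy] using h.degree_add_ne (h.adj_edge hxy)

lemma not_adj_of_degree_eq_add_one {z v : V} (hz : z ∈ ({x, y} : Finset V))
    (hv : v ∉ ({x, y} : Finset V)) (hdeg : H.degree v = H.degree z + 1) : ¬H.Adj z v := by
  intro hadj
  simpa [degree_edge hxy, hz, hv, hdeg] using h.degree_add_ne hadj

lemma image_degree {k : ℕ} (hcard : Fintype.card V = k + 2)
    (hdeg : ∀ v ∉ ({x, y} : Finset V), H.degree v ∈ Ioc 0 k) :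
    ({x, y}ᶜ : Finset V).image (fun v => H.degree v) = Ioc 0 k := by
  refine eq_of_subset_of_card_le (image_subset_iff.2 fun v hv => hdeg v (mem_compl.1 hv)) ?_
  rw [card_image_of_injOn (h.injOn_degree hxy), card_compl, card_pair hxy, hcard, Nat.card_Ioc]
  omega

lemma exists_partition_by_degree {k τ : ℕ} (hτ : τ ≤ k) (hcard : Fintype.card V = k + 2)
    (hdeg : ∀ v ∉ ({x, y} : Finset V), H.degree v ∈ Ioc 0 k) :
    ∃ T B : Finset V, Disjoint T B ∧ T ∪ B = {x, y}ᶜ ∧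
      T.image (fun v => H.degree v) = Ioc τ k ∧ B.image (fun v => H.degree v) = Ioc 0 τ := by
  have hfilter (p : ℕ → Prop) [DecidablePred p] :
      (({x, y}ᶜ : Finset V).filter fun v => p (H.degree v)).image (fun v => H.degree v) =
        (Ioc 0 k).filter p := by
    rw [← h.image_degree hxy hcard hdeg, filter_image]
  refine ⟨({x, y}ᶜ : Finset V).filter (τ < H.degree ·),
    ({x, y}ᶜ : Finset V).filter (¬τ < H.degree ·),
    disjoint_filter_filter_not _ _ _, filter_union_filter_not_eq _ _,
    (hfilter (τ < ·)).trans ?_, (hfilter (¬τ < ·)).trans ?_⟩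
  all_goals
    ext d
    simp only [mem_filter, mem_Ioc]
    omega

lemma sum_degree_balance {T B : Finset V} {t τ : ℕ}
    (hTB : Disjoint T B) (hunion : T ∪ B = {x, y}ᶜ) (htτ : t ≤ τ) (hτt : τ ≤ t + 1)
    (hT : T.image (fun v => H.degree v) = Ioc τ (t + τ))
    (hB : B.image (fun v => H.degree v) = Ioc 0 τ) :
    2 * t + (#{w ∈ B | H.Adj x w} + #{w ∈ B | H.Adj y w}) ≤
      τ + (#{w ∈ T | H.Adj x w} + #{w ∈ T | H.Adj y w}) := by
  have hinj := h.injOn_degree hxy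
  rw [← hunion, coe_union] at hinj
  have hTcard : #T = t := by
    rw [← card_image_of_injOn (hinj.mono Set.subset_union_left), hT, Nat.card_Ioc]
    omega
  have hcount := sum_degree_add_sum_card_le H hTB
  rw [hunion, compl_compl, sum_pair hxy, sum_pair hxy, hTcard] at hcount
  have hTsum : ∑ v ∈ T, H.degree v = t * τ + ∑ i ∈ Ioc 0 t, i := by
    rw [← sum_Ioc_add_eq, ← hT, sum_image (hinj.mono Set.subset_union_left)]
  have hBsum : ∑ v ∈ B, H.degree v = ∑ i ∈ Ioc 0 τ, i := by
    rw [← hB, sum_image (hinj.mono Set.subset_union_right)]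
  obtain rfl | rfl : τ = t ∨ τ = t + 1 := by omega
  · cases τ <;> grind
  · rw [sum_Ioc_succ_top t.zero_le] at hBsum
    cases t <;> grind

lemma degree_eq_add_card_filter_add_one {T B : Finset V} (hTB : Disjoint T B)
    (hunion : T ∪ B = {x, y}ᶜ) {z : V} (hz : z ∈ ({x, y} : Finset V)) :
    H.degree z = #{w ∈ T | H.Adj z w} + #{w ∈ B | H.Adj z w} + 1 := by
  rw [degree_eq_add_card_filter H hTB, hunion, compl_compl, filter_insert, filter_singleton]
  have hadj := h.adj_edge hxy
  obtain rfl | rfl : z = x ∨ z = y := by simpa using hz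
  · simp [hadj]
  · simp [hadj.symm]

omit hxy in
lemma card_filter_adj_pos {S : Finset V} (hS : S ⊆ {x, y}ᶜ) {z : V} (hz : z ∈ ({x, y} : Finset V))
    (hdeg : H.degree z ∈ S.image fun v => H.degree v) : 0 < #{w ∈ S | H.Adj z w} := by
  obtain ⟨v, hv, hvz⟩ := mem_image.1 hdeg
  have hne : z ≠ v := fun hzv => mem_compl.1 (hS hv) (hzv ▸ hz)
  exact card_pos.2 ⟨v, mem_filter.2 ⟨hv, h.adj_of_degree_eq hne hvz.symm⟩⟩

lemma card_filter_adj_lt_card {S : Finset V} (hS : S ⊆ {x, y}ᶜ) {z : V}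
    (hz : z ∈ ({x, y} : Finset V)) (hdeg : H.degree z + 1 ∈ S.image fun v => H.degree v) :
    #{w ∈ S | H.Adj z w} < #S := by
  obtain ⟨v, hv, hvz⟩ := mem_image.1 hdeg
  exact card_lt_card (filter_ssubset.2
    ⟨v, hv, h.not_adj_of_degree_eq_add_one hxy hz (mem_compl.1 (hS hv)) hvz⟩)

theorem eq_two_of_forall_degree_mem_Ioc {k : ℕ} (hcard : Fintype.card V = k + 2) (hk : k ≤ 8)
    (hdeg : ∀ v ∉ ({x, y} : Finset V), H.degree v ∈ Ioc 0 k) :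
    k = 2 ∧ (H.degree x = 2 ∧ H.degree y = 3 ∨ H.degree x = 3 ∧ H.degree y = 2) := by
  obtain ⟨t, τ, rfl, htτ, hτt⟩ : ∃ t τ, k = t + τ ∧ t ≤ τ ∧ τ ≤ t + 1 :=
    ⟨k / 2, (k + 1) / 2, by omega⟩
  obtain ⟨T, B, hTB, hunion, hT, hB⟩ :=
    h.exists_partition_by_degree hxy (Nat.le_add_left τ t) hcard hdeg
  have hTsub : T ⊆ {x, y}ᶜ := hunion ▸ subset_union_left
  have hTcard : #T = t := by
    rw [← card_image_of_injOn ((h.injOn_degree hxy).mono (coe_subset.2 hTsub)), hT, Nat.card_Ioc,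
      Nat.add_sub_cancel]
  have hendpoint (z : V) (hz : z ∈ ({x, y} : Finset V)) :
      #{w ∈ T | H.Adj z w} ≤ t ∧
      H.degree z = #{w ∈ T | H.Adj z w} + #{w ∈ B | H.Adj z w} + 1 ∧
      (H.degree z ≤ τ → 0 < #{w ∈ B | H.Adj z w}) ∧
      (τ ≤ H.degree z → H.degree z < t + τ → #{w ∈ T | H.Adj z w} < t) := by
    have hzdeg := h.degree_eq_add_card_filter_add_one hxy hTB hunion hz
    refine ⟨hTcard ▸ card_filter_le _ _, hzdeg, fun hzτ => ?_, fun hτz hzk => ?_⟩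
    · exact h.card_filter_adj_pos (hunion ▸ subset_union_right) hz (hB ▸ mem_Ioc.2 (by omega))
    · exact hTcard ▸ h.card_filter_adj_lt_card hxy hTsub hz (hT ▸ mem_Ioc.2 (by omega))
  have hbalance := h.sum_degree_balance hxy hTB hunion htτ hτt hT hB
  have hne := h.degree_ne_degree hxy
  have hx := hendpoint x (by simp)
  have hy := hendpoint y (by simp)
  -- For an endpoint, let `a` be its number of neighbours in `B` and `q` its number of
  -- non-neighbours in `T`. By the balance, these four numbers sum to at most `τ ≤ 4`. If `2 ≤ τ`,
  -- then `1 ≤ a`, and `1 ≤ q` or `τ - 1 ≤ a`, so the sum is too large unless both endpoints have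
  -- the same `a` and `q`, hence the same degree.
  omega

end IsIrregularDoubling

end SingleEdge

section Deletion

variable {u : V} {p : Prop}

lemma card_compl_singleton (u : V) : Fintype.card ({u}ᶜ : Set V) + 1 = Fintype.card V := by
  rw [Fintype.card_compl_set, Set.card_singleton,
    Nat.sub_add_cancel (Fintype.card_pos_iff.2 ⟨u⟩)]

lemma degree_eq_degree_induce_add (G : SimpleGraph V) [DecidableRel G.Adj]
    (hG : ∀ w ≠ u, G.Adj u w ↔ p) (w : ({u}ᶜ : Set V)) :
    G.degree w = (G.induce {u}ᶜ).degree w + if p then 1 else 0 := by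
  have hwu : G.Adj w u ↔ p := (G.adj_comm _ _).trans (hG w w.2)
  simp only [← card_neighborFinset_eq_degree, neighborFinset_eq_filter, card_filter]
  rw [Fintype.sum_eq_add_sum_compl u, add_comm,
    sum_subtype (p := (· ∈ ({u}ᶜ : Set V))) (F := inferInstance) {u}ᶜ (by simp)]
  simp only [hwu, induce_adj]

lemma IsIrregularDoubling.induce_compl_singleton {H D : SimpleGraph V} [DecidableRel H.Adj]
    [DecidableRel D.Adj] (h : IsIrregularDoubling H D) (hH : ∀ w ≠ u, H.Adj u w ↔ p)
    (hD : D.IsIsolated u) : IsIrregularDoubling (H.induce {u}ᶜ) (D.induce {u}ᶜ) := by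
  have hHdeg := degree_eq_degree_induce_add H hH
  have hDdeg := degree_eq_degree_induce_add D fun w _ => iff_false_intro (@hD w)
  refine ⟨comap_monotone _ h.le, fun v w hvw => ?_, fun v w hvw hnadj => ?_⟩
  · have := h.degree_add_ne (induce_adj.1 hvw)
    rw [hHdeg, hHdeg, hDdeg, hDdeg] at this
    omega
  · have := h.degree_ne (Subtype.coe_ne_coe.2 hvw) hnadj
    rw [hHdeg, hHdeg] at this
    omega

lemma induce_edge {V : Type*} {x y : V} {s : Set V} (hx : x ∈ s) (hy : y ∈ s) :
    (edge x y).induce s = edge ⟨x, hx⟩ ⟨y, hy⟩ := by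
  ext u v
  simp [edge_adj, Subtype.ext_iff]

lemma IsIrregularDoubling.induce_compl_singleton_edge {H : SimpleGraph V} [DecidableRel H.Adj]
    {x y : V}
    (h : IsIrregularDoubling H (edge x y)) (hH : ∀ w ≠ u, H.Adj u w ↔ p) (hx : x ≠ u)
    (hy : y ≠ u) : IsIrregularDoubling (H.induce {u}ᶜ) (edge ⟨x, hx⟩ ⟨y, hy⟩) := by
  have hisolated : (edge x y).IsIsolated u := fun w => by simp [edge_adj, hx.symm, hy.symm]
  convert h.induce_compl_singleton hH hisolated
  exact (induce_edge _ _).symm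

end Deletion

section Classification

/-- What a graph `H` on at most ten vertices must look like for the single edge `xy` to be an
irregular doubling of it. -/
structure IsSmallCase (H : SimpleGraph V) [DecidableRel H.Adj] (x y : V) : Prop where
  card_eq : Fintype.card V = 4 ∨ Fintype.card V = 5 ∧ ∃ u, H.IsIsolated u
  degree_eq : H.degree x = 2 ∧ H.degree y = 3 ∨ H.degree x = 3 ∧ H.degree y = 2

namespace IsIrregularDoubling

variable {H : SimpleGraph V} [DecidableRel H.Adj] {x y u : V}

lemma isSmallCase_of_isIsolated (h : IsIrregularDoubling H (edge x y)) (hu : H.IsIsolated u)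
    (hx : x ≠ u) (hy : y ≠ u) (hsmall : IsSmallCase (H.induce {u}ᶜ) ⟨x, hx⟩ ⟨y, hy⟩) :
    IsSmallCase H x y := by
  have hdeg := degree_eq_degree_induce_add H fun w _ => iff_false_intro (@hu w)
  have hcard := card_compl_singleton u
  obtain ⟨hcard4 | ⟨-, w, hw⟩, hdegrees⟩ := hsmall
  · refine ⟨.inr ⟨by omega, u, hu⟩, ?_⟩
    simpa [hdeg ⟨x, hx⟩, hdeg ⟨y, hy⟩] using hdegrees
  · have huw : H.degree u = H.degree w := by
      rw [(H.degree_eq_zero u).2 hu, hdeg, hw.degree_eq_zero, if_false]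
    exact absurd (h.adj_of_degree_eq (Ne.symm w.2) huw) (@hu w)

lemma not_isSmallCase_of_isUniversal (h : IsIrregularDoubling H (edge x y))
    (hu : H.IsUniversal u) (hxy : x ≠ y) (hx : x ≠ u) (hy : y ≠ u) :
    ¬IsSmallCase (H.induce {u}ᶜ) ⟨x, hx⟩ ⟨y, hy⟩ := by
  intro hsmall
  have hdeg := degree_eq_degree_induce_add H fun w hw => iff_true_intro (hu hw.symm)
  have hdegu := (H.degree_eq_card_sub_one u).2 hu
  have hcard := card_compl_singleton u
  have hdegx := hdeg ⟨x, hx⟩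
  have hdegy := hdeg ⟨y, hy⟩
  simp only [if_true] at hdegx hdegy
  obtain ⟨z, hz, hzu⟩ : ∃ z ∈ ({x, y} : Finset V), H.degree u = H.degree z + 1 := by
    rcases hsmall with ⟨hcard' | ⟨hcard', -⟩, hdegrees | hdegrees⟩
    · exact ⟨x, by simp, by omega⟩
    · exact ⟨y, by simp, by omega⟩
    · exact ⟨y, by simp, by omega⟩
    · exact ⟨x, by simp, by omega⟩
  exact h.not_adj_of_degree_eq_add_one hxy hz (by grind) hzu (hu (by grind)).symm

theorem isSmallCase (h : IsIrregularDoubling H (edge x y)) (hxy : x ≠ y)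
    (hcard : Fintype.card V ≤ 10) : IsSmallCase H x y := by
  induction hn : Fintype.card V using Nat.strong_induction_on generalizing V with
  | _ n ih
  by_cases hextreme : ∃ u ∉ ({x, y} : Finset V), H.IsIsolated u ∨ H.IsUniversal u
  · obtain ⟨u, hu, hext⟩ := hextreme
    obtain ⟨hx, hy⟩ : x ≠ u ∧ y ≠ u := by grind
    have hcard' : Fintype.card ({u}ᶜ : Set V) < Fintype.card V := by
      have := card_compl_singleton u
      omega
    have hsmall {p : Prop} (hH : ∀ w ≠ u, H.Adj u w ↔ p) :
        IsSmallCase (H.induce {u}ᶜ) ⟨x, hx⟩ ⟨y, hy⟩ :=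
      ih _ (hcard'.trans_eq hn) (by convert h.induce_compl_singleton_edge hH hx hy)
        (fun he => hxy (congrArg Subtype.val he)) (by omega) rfl
    obtain hisolated | huniversal := hext
    · exact h.isSmallCase_of_isIsolated hisolated hx hy
        (hsmall fun w _ => iff_false_intro (@hisolated w))
    · exact (h.not_isSmallCase_of_isUniversal huniversal hxy hx hy
        (hsmall fun w hw => iff_true_intro (huniversal hw.symm))).elim
  have hdeg (v) (hv : v ∉ ({x, y} : Finset V)) : H.degree v ∈ Ioc 0 (Fintype.card V - 2) := by
    have := H.degree_lt_card_verts v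
    have := H.degree_eq_zero v
    have := H.degree_eq_card_sub_one v
    grind
  have := Fintype.one_lt_card_iff.2 ⟨x, y, hxy⟩
  have := h.eq_two_of_forall_degree_mem_Ioc hxy (by omega) (by omega) hdeg
  exact ⟨.inl (by omega), this.2⟩

end IsIrregularDoubling

theorem ValidDC.two_le_card {D : Finset (Sym2 V)} {c : Sym2 V → Fin 2} (h : ValidDC ⊤ D c)
    (hcard : 6 ≤ Fintype.card V) (hcard' : Fintype.card V ≤ 10) : 2 ≤ #D := by
  have : Nontrivial V := Fintype.one_lt_card_iff_nontrivial.1 (by omega)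
  by_contra! hD
  obtain ⟨e, rfl⟩ := card_eq_one.1 (Nat.le_antisymm (Nat.le_of_lt_succ hD) h.one_le_card)
  induction e with | _ x y
  have hxy : x ≠ y := by simpa using h.1
  have hirr : IsIrregularDoubling (colorGraph c (c s(x, y))) (edge x y) := by
    convert (validDC_top_iff (i := c s(x, y)) h.1 (by simp)).1 h
    simp [edge]
  have := (hirr.isSmallCase hxy hcard').card_eq
  omega

end Classification

/-- For `n ≥ 4`, `D_lir(K_n) = 2` if `6 ≤ n ≤ 10` and `D_lir(K_n) = 1` otherwise:
`K_n` admits a valid doubling-coloring with that many doubled edges, and none with fewer. -/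
theorem Dlir_completeGraph (n : ℕ) (hn : 4 ≤ n) :
    (∃ (D : Finset (Sym2 (Fin n))) (c : Sym2 (Fin n) → Fin 2),
        ValidDC (⊤ : SimpleGraph (Fin n)) D c ∧
        D.card = (if 6 ≤ n ∧ n ≤ 10 then 2 else 1)) ∧
    (∀ (D : Finset (Sym2 (Fin n))) (c : Sym2 (Fin n) → Fin 2),
        ValidDC (⊤ : SimpleGraph (Fin n)) D c →
        (if 6 ≤ n ∧ n ≤ 10 then 2 else 1) ≤ D.card) := by
  refine ⟨exists_validDC_card_eq hn, fun D c h => ?_⟩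
  have : Nontrivial (Fin n) := Fin.nontrivial_iff_two_le.2 (by omega)
  split_ifs with hsmall
  · exact h.two_le_card (by simpa using hsmall.1) (by simpa using hsmall.2)
  · exact h.one_le_card
end

section
/- Let G be a split graph different from a complete graph, with a maximum clique X = {v_1, ..., v_n} and independent set Y = V(G) \ X, where the vertices are ordered so that deg(v_1) ≥ deg(v_2) ≥ ... ≥ deg(v_n), and let d_i = |N(v_i) ∩ Y| for each i. If one of the following holds: 1) G is a path on four vertices; 2) 4 ≤ n ≤ 10, d_1 = 1, d_2 = 0; 3) 6 ≤ n ≤ 10, d_1 = 2, d_2 = 0; 4) 8 ≤ n ≤ 10, d_1 = 3, d_2 = 0; 5) 6 ≤ n ≤ 8, d_1 = d_2 = 1, d_3 = 0; 6) n = 10, d_1 = 4, d_2 = 0; 7) n ≥ 11, d_1 < ⌊n/2⌋, d_2 = 0; then G admits no 2-liec (equivalently, D_lir(G) ≥ 1). -/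
/-- The degree of a vertex (as the number of neighbors). -/
noncomputable def ndeg {V : Type*} (G : SimpleGraph V) (v : V) : ℕ :=
  {w | G.Adj v w}.ncard

/-!
In a locally irregular 2-edge-coloring, clique vertices without neighbors outside the clique have
pairwise distinct red degrees, because their red and blue degrees sum to `n - 1`. A vertex with no
red edge and a vertex with no blue edge cannot coexist, so after swapping the colors these red
degrees are all of `1, …, n - 1` if there is a single special vertex, and all but one value `m` if
there are two. The Erdős–Gallai argument compares the red degrees above a threshold near `n / 2`
with those below it. Equality nearly holds for these degree sequences, which leaves little room for
defects: high-degree vertices that a special vertex misses in red, and low-degree ones that it is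
joined to in red. A special vertex shares its red degree or its blue degree with ordinary vertices,
and local irregularity then forces more defects than there is room for.
-/

open Finset

section Sums

theorem two_mul_sum_Ico_one_succ (k : ℕ) : 2 * ∑ i ∈ Ico 1 (k + 1), i = (k + 1) * k := by
  have hrange := sum_range_id_mul_two (k + 1)
  rw [range_eq_Ico, sum_eq_sum_Ico_succ_bot k.succ_pos, zero_add, Nat.add_sub_cancel] at hrange
  rw [← hrange, mul_comm]

theorem sum_Ico_add_half {θ n : ℕ} (hθ : 1 ≤ θ) (hθn : θ ≤ n) (hle : n ≤ 2 * θ)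
    (hge : 2 * θ ≤ n + 2) :
    (n - θ) * (n - θ + 1) + ∑ i ∈ Ico 1 θ, i = ∑ i ∈ Ico θ n, i + n / 2 := by
  obtain ⟨t, rfl⟩ := Nat.exists_eq_add_of_le hθn
  obtain ⟨k, rfl⟩ := Nat.exists_eq_add_of_le' hθ
  have hsum := sum_Ico_consecutive id hθ hθn
  have hlow := two_mul_sum_Ico_one_succ k
  have hall := two_mul_sum_Ico_one_succ (k + t)
  rw [Nat.add_sub_cancel_left]
  simp only [id, add_right_comm k 1 t] at hsum ⊢
  obtain rfl | rfl | rfl : t = k + 1 ∨ t = k ∨ k = t + 1 := by omega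
  · rw [show (k + (k + 1) + 1) / 2 = k + 1 by omega]
    linarith
  · rw [show (t + t + 1) / 2 = t by omega]
    linarith
  · rw [show (t + 1 + t + 1) / 2 = t + 1 by omega]
    linarith

theorem half_add_sum_Ico {θ n : ℕ} (hθ : 1 ≤ θ) (hθn : θ < n) (hle : n ≤ 2 * θ + 1)
    (hge : 2 * θ ≤ n + 1) :
    (n - θ - 1) * (n - θ) + ∑ i ∈ Ico 1 θ, i + n / 2 = ∑ i ∈ Ico θ n, i := by
  obtain ⟨t, rfl⟩ := Nat.exists_eq_add_of_lt hθn
  obtain ⟨k, rfl⟩ := Nat.exists_eq_add_of_le' hθ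
  have hsum := sum_Ico_consecutive id hθ hθn.le
  have hlow := two_mul_sum_Ico_one_succ k
  have hall := two_mul_sum_Ico_one_succ (k + t + 1)
  rw [Nat.add_assoc (k + 1), Nat.add_sub_cancel_left, Nat.add_sub_cancel]
  simp only [id, ← add_assoc, add_right_comm k 1 t] at hsum ⊢
  obtain rfl | rfl | rfl : t = k + 1 ∨ t = k ∨ k = t + 1 := by omega
  · rw [show (k + (k + 1) + 1 + 1) / 2 = k + 1 by omega]
    linarith
  · rw [show (t + t + 1 + 1) / 2 = t + 1 by omega]
    linarith
  · rw [show (t + 1 + t + 1 + 1) / 2 = t + 1 by omega]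
    linarith

theorem card_filter_add_of_insert_eq_Ico {D : Finset ℕ} {m n θ : ℕ} (hm : m ∉ D)
    (hD : insert m D = Ico 1 n) (hθ : 1 ≤ θ) :
    #{i ∈ D | θ ≤ i} + (if θ ≤ m then 1 else 0) = n - θ := by
  rw [← Nat.card_Ico, ← Ico_filter_le_of_left_le hθ, ← hD, filter_insert]
  split_ifs
  · rw [card_insert_of_notMem fun h ↦ hm (mem_of_mem_filter _ h)]
  · rfl

theorem sum_filter_add_of_insert_eq {D I : Finset ℕ} {m : ℕ} (hm : m ∉ D)
    (hD : insert m D = I) (P : ℕ → Prop) [DecidablePred P] :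
    ∑ i ∈ D with P i, i + (if P m then m else 0) = ∑ i ∈ I with P i, i := by
  rw [← hD, filter_insert]
  split_ifs
  · rw [sum_insert fun h ↦ hm (mem_of_mem_filter _ h), add_comm]
  · rfl

end Sums

theorem sum_card_filter_comm {α : Type*} {r : α → α → Prop} [DecidableRel r]
    (hr : ∀ v w, r v w ↔ r w v) (A B : Finset α) :
    ∑ v ∈ A, #{w ∈ B | r v w} = ∑ w ∈ B, #{v ∈ A | r w v} := by
  refine (sum_card_bipartiteAbove_eq_sum_card_bipartiteBelow r).trans ?_
  simp only [bipartiteBelow, hr]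

section Threshold

variable {α : Type*} (R : SimpleGraph α) [DecidableRel R.Adj]

theorem card_filter_adj_le_sub_one {T : Finset α} {w : α} (hw : w ∈ T) :
    #{x ∈ T | R.Adj w x} ≤ #T - 1 := by
  classical
  rw [← card_erase_of_mem hw]
  refine card_le_card fun x hx ↦ ?_
  obtain ⟨hxT, hadj⟩ := mem_filter.1 hx
  exact mem_erase.2 ⟨hadj.ne', hxT⟩

variable [DecidableEq α]

theorem card_filter_pair_adj (u v : α) :
    #{w ∈ {u, v} | R.Adj u w} = #{w ∈ {u, v} | R.Adj v w} := by
  simp only [filter_insert, filter_singleton, R.irrefl, R.adj_comm v u, if_false]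
  split_ifs <;> rfl

variable [Fintype α]

theorem degree_eq_card_filter_add {T L : Finset α} (hTL : Disjoint T L) (v : α) :
    R.degree v = #{w ∈ T | R.Adj v w} + #{w ∈ L | R.Adj v w} + #{w ∈ (T ∪ L)ᶜ | R.Adj v w} := by
  rw [← R.card_neighborFinset_eq_degree, R.neighborFinset_eq_filter]
  simp only [card_filter]
  rw [← sum_union hTL, sum_add_sum_compl]

theorem sum_degree_add_sum_defect_le {T L : Finset α} (hTL : Disjoint T L) :
    ∑ w ∈ T, R.degree w +
        ∑ v ∈ (T ∪ L)ᶜ, (#{w ∈ T | ¬ R.Adj v w} + #{w ∈ L | R.Adj v w}) ≤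
      #T * (#T - 1 + #(T ∪ L)ᶜ) + ∑ w ∈ L, R.degree w := by
  have hT : ∀ w ∈ T, R.degree w + #{v ∈ (T ∪ L)ᶜ | ¬ R.Adj w v} ≤
      #T - 1 + #(T ∪ L)ᶜ + #{x ∈ L | R.Adj w x} := fun w hw ↦ by
    have hsplit := degree_eq_card_filter_add R hTL w
    have hle := card_filter_adj_le_sub_one R hw
    have hS := card_filter_add_card_filter_not (s := (T ∪ L)ᶜ) fun v ↦ R.Adj w v
    omega
  have hL : ∀ w ∈ L, #{x ∈ T | R.Adj w x} + #{v ∈ (T ∪ L)ᶜ | R.Adj w v} ≤ R.degree w :=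
    fun w _ ↦ by have := degree_eq_card_filter_add R hTL w; omega
  have hcomm := sum_card_filter_comm R.adj_comm
  have hcomm' := sum_card_filter_comm fun v w ↦ not_congr (R.adj_comm v w)
  have hsumT := sum_le_sum hT
  have hsumL := sum_le_sum hL
  simp only [sum_add_distrib, sum_const, smul_eq_mul] at hsumT hsumL ⊢
  rw [hcomm' _ T, hcomm _ L]
  rw [hcomm L T] at hsumL
  rw [mul_add]
  omega

variable (S : Finset α) (θ : ℕ)

/-- The vertices outside `S` of degree at least `θ`. -/
def highVerts : Finset α := {w ∈ Sᶜ | θ ≤ R.degree w}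

/-- The vertices outside `S` of degree less than `θ`. -/
def lowVerts : Finset α := {w ∈ Sᶜ | R.degree w < θ}

/-- The number of high vertices that `v` misses. Together with `lowDefect` it measures how far the
neighborhood of `v` outside `S` is from the set of high vertices. -/
def highDefect (v : α) : ℕ := #{w ∈ highVerts R S θ | ¬ R.Adj v w}

/-- The number of low vertices that `v` is adjacent to. -/
def lowDefect (v : α) : ℕ := #{w ∈ lowVerts R S θ | R.Adj v w}

theorem highVerts_subset : highVerts R S θ ⊆ Sᶜ := filter_subset _ _

theorem lowVerts_subset : lowVerts R S θ ⊆ Sᶜ := filter_subset _ _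

theorem disjoint_highVerts_lowVerts : Disjoint (highVerts R S θ) (lowVerts R S θ) :=
  disjoint_filter.2 fun _ _ hle ↦ hle.not_gt

theorem compl_highVerts_union_lowVerts : (highVerts R S θ ∪ lowVerts R S θ)ᶜ = S := by
  simp only [highVerts, lowVerts, ← not_le, filter_union_filter_not_eq, compl_compl]

theorem degree_add_highDefect (v : α) :
    R.degree v + highDefect R S θ v =
      #(highVerts R S θ) + lowDefect R S θ v + #{w ∈ S | R.Adj v w} := by
  have hsplit := degree_eq_card_filter_add R (disjoint_highVerts_lowVerts R S θ) v
  have hhigh := card_filter_add_card_filter_not (s := highVerts R S θ) fun w ↦ R.Adj v w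
  rw [compl_highVerts_union_lowVerts] at hsplit
  simp only [highDefect, lowDefect]
  omega

/-- The set of degrees of the vertices outside `S`. -/
def degreeSet : Finset ℕ := Sᶜ.image fun v ↦ R.degree v

theorem degreeSet_filter_ge :
    {i ∈ degreeSet R S | θ ≤ i} = (highVerts R S θ).image fun v ↦ R.degree v :=
  filter_image

theorem degreeSet_filter_lt :
    {i ∈ degreeSet R S | i < θ} = (lowVerts R S θ).image fun v ↦ R.degree v :=
  filter_image

variable {S}

theorem degreeSet_subset (h0 : 0 ∉ degreeSet R S) : degreeSet R S ⊆ Ico 1 (Fintype.card α) := by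
  intro i hi
  obtain ⟨v, -, rfl⟩ := mem_image.1 hi
  exact mem_Ico.2 ⟨Nat.one_le_iff_ne_zero.2 fun hv ↦ h0 (hv ▸ hi), R.degree_lt_card_verts v⟩

theorem card_highVerts (hinj : Set.InjOn (fun v ↦ R.degree v) (Sᶜ : Finset α)) :
    #(highVerts R S θ) = #{i ∈ degreeSet R S | θ ≤ i} := by
  rw [degreeSet_filter_ge, card_image_of_injOn (hinj.mono (highVerts_subset R S θ))]

theorem sum_degreeSet_add_sum_defect_le
    (hinj : Set.InjOn (fun v ↦ R.degree v) (Sᶜ : Finset α)) :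
    ∑ i ∈ degreeSet R S with θ ≤ i, i + ∑ v ∈ S, (highDefect R S θ v + lowDefect R S θ v) ≤
      #(highVerts R S θ) * (#(highVerts R S θ) - 1 + #S) + ∑ i ∈ degreeSet R S with i < θ, i := by
  have h := sum_degree_add_sum_defect_le R (disjoint_highVerts_lowVerts R S θ)
  rw [compl_highVerts_union_lowVerts] at h
  rwa [degreeSet_filter_ge, degreeSet_filter_lt,
    sum_image (hinj.mono (highVerts_subset R S θ)), sum_image (hinj.mono (lowVerts_subset R S θ))]

theorem sum_defect_add_le_half_of_degreeSet_eq {n : ℕ} (hS : #S = 1)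
    (hinj : Set.InjOn (fun v ↦ R.degree v) (Sᶜ : Finset α)) (hD : degreeSet R S = Ico 1 n)
    (hθ : 1 ≤ θ) (hθn : θ < n) (hle : n ≤ 2 * θ) (hge : 2 * θ ≤ n + 2) :
    #(highVerts R S θ) = n - θ ∧
      ∑ v ∈ S, (highDefect R S θ v + lowDefect R S θ v) + (n - θ) ≤ n / 2 := by
  have hhigh := card_highVerts R θ hinj
  have hdefect := sum_degreeSet_add_sum_defect_le R θ hinj
  rw [hD, Ico_filter_le_of_left_le hθ, Nat.card_Ico] at hhigh
  rw [hD, Ico_filter_le_of_left_le hθ, Ico_filter_lt_of_le_right hθn.le, hhigh, hS,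
    Nat.sub_add_cancel (by omega)] at hdefect
  have hsum := sum_Ico_add_half hθ hθn.le hle hge
  rw [mul_add_one] at hsum
  exact ⟨hhigh, by omega⟩

theorem sum_defect_add_le_half {m n : ℕ} (hS : #S = 2)
    (hinj : Set.InjOn (fun v ↦ R.degree v) (Sᶜ : Finset α)) (hm : m ∉ degreeSet R S)
    (hD : insert m (degreeSet R S) = Ico 1 n) (hmθ : m < θ) (hθn : θ < n) (hle : n ≤ 2 * θ)
    (hge : 2 * θ ≤ n + 2) :
    #(highVerts R S θ) = n - θ ∧
      ∑ v ∈ S, (highDefect R S θ v + lowDefect R S θ v) + m ≤ n / 2 := by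
  have hθ : 1 ≤ θ := by omega
  have hhigh := card_filter_add_of_insert_eq_Ico hm hD hθ
  have hsumT := sum_filter_add_of_insert_eq hm hD (θ ≤ ·)
  have hsumL := sum_filter_add_of_insert_eq hm hD (· < θ)
  have hdefect := sum_degreeSet_add_sum_defect_le R θ hinj
  rw [← card_highVerts R θ hinj, if_neg hmθ.not_ge, add_zero] at hhigh
  rw [Ico_filter_le_of_left_le hθ, if_neg hmθ.not_ge] at hsumT
  rw [Ico_filter_lt_of_le_right hθn.le, if_pos hmθ] at hsumL
  rw [hhigh, hS, show n - θ - 1 + 2 = n - θ + 1 by omega] at hdefect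
  have hsum := sum_Ico_add_half hθ hθn.le hle hge
  exact ⟨hhigh, by omega⟩

theorem sum_defect_add_half_le {m n : ℕ} (hS : #S = 2)
    (hinj : Set.InjOn (fun v ↦ R.degree v) (Sᶜ : Finset α)) (hm : m ∉ degreeSet R S)
    (hD : insert m (degreeSet R S) = Ico 1 n) (hθ : 1 ≤ θ) (hθm : θ ≤ m) (hθn : θ + 1 < n)
    (hle : n ≤ 2 * θ + 1) (hge : 2 * θ ≤ n + 1) :
    #(highVerts R S θ) = n - θ - 1 ∧
      ∑ v ∈ S, (highDefect R S θ v + lowDefect R S θ v) + n / 2 ≤ m := by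
  have hhigh := card_filter_add_of_insert_eq_Ico hm hD hθ
  have hsumT := sum_filter_add_of_insert_eq hm hD (θ ≤ ·)
  have hsumL := sum_filter_add_of_insert_eq hm hD (· < θ)
  have hdefect := sum_degreeSet_add_sum_defect_le R θ hinj
  rw [← card_highVerts R θ hinj, if_pos hθm] at hhigh
  rw [Ico_filter_le_of_left_le hθ, if_pos hθm] at hsumT
  rw [Ico_filter_lt_of_le_right (by omega), if_neg hθm.not_gt] at hsumL
  rw [show #(highVerts R S θ) = n - θ - 1 by omega, hS,
    show n - θ - 1 - 1 + 2 = n - θ by omega] at hdefect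
  have hsum := half_add_sum_Ico hθ (by omega) hle hge
  exact ⟨by omega, by omega⟩

-- `θ` is adjusted to `e` so that it is about `#(highVerts R S θ) + e`, the degree of a vertex of
-- `S` with no defect and with `e` neighbors in `S`.
theorem exists_threshold_of_insert_eq {e m n : ℕ} (hS : #S = 2)
    (hinj : Set.InjOn (fun v ↦ R.degree v) (Sᶜ : Finset α)) (hm : m ∉ degreeSet R S)
    (hD : insert m (degreeSet R S) = Ico 1 n) (he : e ≤ 1) (hn : 6 ≤ n) :
    ∃ θ,
      (m < θ ∧ θ = (n + e + 1) / 2 ∧ #(highVerts R S θ) = n - θ ∧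
        ∑ v ∈ S, (highDefect R S θ v + lowDefect R S θ v) + m ≤ n / 2) ∨
      (θ ≤ m ∧ θ = (n + e) / 2 ∧ #(highVerts R S θ) = n - θ - 1 ∧
        ∑ v ∈ S, (highDefect R S θ v + lowDefect R S θ v) + n / 2 ≤ m) := by
  rcases lt_or_ge (2 * m) n with hlt | hge
  · exact ⟨_, .inl ⟨by omega, rfl, sum_defect_add_le_half R _ hS hinj hm hD
      (by omega) (by omega) (by omega) (by omega)⟩⟩
  · exact ⟨_, .inr ⟨by omega, rfl, sum_defect_add_half_le R _ hS hinj hm hD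
      (by omega) (by omega) (by omega) (by omega) (by omega)⟩⟩

end Threshold

section IrregularPair

/-- A locally irregular 2-edge-coloring of a complete graph with pendant edges: the complete graph
is the union of the color classes `R` (red) and `B` (blue), and `p v` red and `q v` blue pendant
edges are attached to `v`. Pendant edges occur only at the vertices of `S`. -/
structure IsIrregularPair {α : Type*} [Fintype α] (R B : SimpleGraph α) [DecidableRel R.Adj]
    [DecidableRel B.Adj] (S : Finset α) (p q : α → ℕ) : Prop where
  isCompl : IsCompl R B
  red_ne : ∀ ⦃v w⦄, R.Adj v w → R.degree v + p v ≠ R.degree w + p w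
  blue_ne : ∀ ⦃v w⦄, B.Adj v w → B.degree v + q v ≠ B.degree w + q w
  red_eq_zero : ∀ v ∉ S, p v = 0
  blue_eq_zero : ∀ v ∉ S, q v = 0

namespace IsIrregularPair

variable {α : Type*} [Fintype α] {R B : SimpleGraph α} [DecidableRel R.Adj] [DecidableRel B.Adj]
  {S : Finset α} {p q : α → ℕ}

theorem symm (h : IsIrregularPair R B S p q) : IsIrregularPair B R S q p :=
  ⟨h.isCompl.symm, h.blue_ne, h.red_ne, h.blue_eq_zero, h.red_eq_zero⟩

theorem adj_or_adj (h : IsIrregularPair R B S p q) {v w : α} (hne : v ≠ w) :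
    R.Adj v w ∨ B.Adj v w := by
  rw [← SimpleGraph.sup_adj, h.isCompl.sup_eq_top]
  exact hne

theorem degree_add_degree (h : IsIrregularPair R B S p q) (v : α) :
    R.degree v + B.degree v + 1 = Fintype.card α := by
  classical
  obtain rfl := h.isCompl.compl_eq
  have hlt := R.degree_lt_card_verts v
  rw [R.degree_compl]
  omega

theorem red_degree_ne (h : IsIrregularPair R B S p q) {v w : α} (hne : v ≠ w)
    (hpq : p v + q v = p w + q w) : R.degree v + p v ≠ R.degree w + p w := by
  rcases h.adj_or_adj hne with hred | hblue
  · exact h.red_ne hred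
  · have hblue_ne := h.blue_ne hblue
    have hv := h.degree_add_degree v
    have hw := h.degree_add_degree w
    omega

variable [DecidableEq α]

theorem injOn_degree (h : IsIrregularPair R B S p q) :
    Set.InjOn (fun v ↦ R.degree v) (Sᶜ : Finset α) := by
  intro v hv w hw heq
  by_contra hne
  have hvS : v ∉ S := mem_compl.1 hv
  have hwS : w ∉ S := mem_compl.1 hw
  refine h.red_degree_ne hne ?_ ?_ <;>
    simp_all [h.red_eq_zero, h.blue_eq_zero]

theorem highDefect_pos (h : IsIrregularPair R B S p q) {v : α} {θ : ℕ}
    (hmem : R.degree v + p v ∈ degreeSet R S) (hθ : θ ≤ R.degree v + p v) :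
    0 < highDefect R S θ v := by
  obtain ⟨w, hwS, hw⟩ := mem_image.1 hmem
  refine card_pos.2 ⟨w, mem_filter.2 ⟨mem_filter.2 ⟨hwS, hw ▸ hθ⟩, fun hred ↦ ?_⟩⟩
  have hpw := h.red_eq_zero w (mem_compl.1 hwS)
  have hne := h.red_ne hred
  omega

theorem lowDefect_pos (h : IsIrregularPair R B S p q) {v : α} {i θ : ℕ} (hv : v ∈ S)
    (hmem : i ∈ degreeSet R S) (hi : R.degree v = i + q v) (hθ : i < θ) :
    0 < lowDefect R S θ v := by
  obtain ⟨w, hwS, rfl⟩ := mem_image.1 hmem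
  refine card_pos.2 ⟨w, mem_filter.2 ⟨mem_filter.2 ⟨hwS, hθ⟩, ?_⟩⟩
  have hne : v ≠ w := by rintro rfl; exact mem_compl.1 hwS hv
  refine (h.adj_or_adj hne).resolve_right fun hblue ↦ ?_
  have hqw := h.blue_eq_zero w (mem_compl.1 hwS)
  have hblue_ne := h.blue_ne hblue
  have hdv := h.degree_add_degree v
  have hdw := h.degree_add_degree w
  omega

theorem card_degreeSet (h : IsIrregularPair R B S p q) :
    #(degreeSet R S) + #S = Fintype.card α := by
  rw [degreeSet, card_image_of_injOn h.injOn_degree, card_compl_add_card]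

theorem zero_notMem_degreeSet_or [Nontrivial α] (h : IsIrregularPair R B S p q) :
    0 ∉ degreeSet R S ∨ 0 ∉ degreeSet B S := by
  by_contra! ⟨hR, hB⟩
  obtain ⟨v, -, hv⟩ := mem_image.1 hR
  obtain ⟨w, -, hw⟩ := mem_image.1 hB
  have hvw : v ≠ w := by
    rintro rfl
    have hdeg := h.degree_add_degree v
    have hcard := Fintype.one_lt_card (α := α)
    omega
  rcases h.adj_or_adj hvw with hred | hblue
  · exact ((R.degree_pos_iff_exists_adj v).2 ⟨w, hred⟩).ne' hv
  · exact ((B.degree_pos_iff_exists_adj w).2 ⟨v, hblue.symm⟩).ne' hw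

theorem half_card_le_of_zero_notMem {v : α} (h : IsIrregularPair R B {v} p q)
    (h0 : 0 ∉ degreeSet R {v}) : Fintype.card α / 2 ≤ p v + q v := by
  by_contra! hlt
  have hcard := h.card_degreeSet
  rw [card_singleton] at hcard
  generalize hn : Fintype.card α = n at hlt hcard
  have hD : degreeSet R {v} = Ico 1 n :=
    eq_of_subset_of_card_le (hn ▸ degreeSet_subset R h0) (by rw [Nat.card_Ico]; omega)
  have hmem {i : ℕ} (hi : 1 ≤ i) (hin : i < n) : i ∈ degreeSet R {v} := hD ▸ mem_Ico.2 ⟨hi, hin⟩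
  obtain ⟨hhigh, hdefect⟩ := sum_defect_add_le_half_of_degreeSet_eq R ((n + 1) / 2)
    (card_singleton v) h.injOn_degree hD (by omega) (by omega) (by omega) (by omega)
  rw [sum_singleton] at hdefect
  have hdeg : R.degree v = n / 2 := by
    have hdeg := degree_add_highDefect R {v} ((n + 1) / 2) v
    rw [filter_singleton, if_neg (R.loopless.irrefl v), card_empty] at hdeg
    omega
  by_cases hp : (n + 1) / 2 ≤ n / 2 + p v
  · have hpos := h.highDefect_pos (hmem (i := R.degree v + p v) (by omega) (by omega)) (hdeg ▸ hp)
    omega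
  · have hpos := h.lowDefect_pos (θ := (n + 1) / 2) (mem_singleton_self v)
      (hmem (i := n / 2 - q v) (by omega) (by omega)) (by omega) (by omega)
    omega

omit [DecidableEq α] in
theorem half_card_le {v : α} (h : IsIrregularPair R B {v} p q) :
    Fintype.card α / 2 ≤ p v + q v := by
  classical
  cases subsingleton_or_nontrivial α with
  | inl _ =>
    have hcard := Fintype.card_le_one_iff_subsingleton.2 ‹_›
    omega
  | inr _ =>
    rcases h.zero_notMem_degreeSet_or with h0 | h0
    · exact h.half_card_le_of_zero_notMem h0
    · exact add_comm (p v) (q v) ▸ h.symm.half_card_le_of_zero_notMem h0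

theorem two_le_defect_or {m n θ c : ℕ} (h : IsIrregularPair R B S p q)
    (hD : insert m (degreeSet R S) = Ico 1 n) {x : α} (hx : x ∈ S) (hpq : p x + q x = 1)
    (hc : #(highVerts R S θ) + #{w ∈ S | R.Adj x w} = c) (hc2 : 2 ≤ c) (hcθ : c ≤ θ)
    (hθc : θ ≤ c + 1) (hcn : c + 3 ≤ n) :
    2 ≤ highDefect R S θ x + lowDefect R S θ x ∨
      (R.degree x + p x = 1 ∧ c ≤ highDefect R S θ x + lowDefect R S θ x + 1) ∨
      (R.degree x + p x = (if m < θ then m + 1 else m) ∧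
        c ≤ highDefect R S θ x + lowDefect R S θ x + (m + 1) ∧
        m ≤ highDefect R S θ x + lowDefect R S θ x + (c + 1)) := by
  have hmem {i : ℕ} (h1 : 1 ≤ i) (hin : i < n) (him : i ≠ m) : i ∈ degreeSet R S :=
    mem_of_mem_insert_of_ne (hD ▸ mem_Ico.2 ⟨h1, hin⟩) him
  have hdeg := degree_add_highDefect R S θ x
  generalize hr : R.degree x + p x = r
  -- The vertex of degree `r` outside `S` has the same red degree as `x`, so it is not a red
  -- neighbor; that of degree `r - 1` has the same blue degree as `x`, so it is one.
  have hhigh (h1 : 1 ≤ r) (hrn : r < n) (hrm : r ≠ m) (hθ : θ ≤ r) : 0 < highDefect R S θ x :=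
    h.highDefect_pos (hr ▸ hmem h1 hrn hrm) (hr ▸ hθ)
  have hlow (h1 : 1 < r) (hrn : r ≤ n) (hrm : r ≠ m + 1) (hθ : r ≤ θ) : 0 < lowDefect R S θ x :=
    h.lowDefect_pos hx (hmem (i := r - 1) (by omega) (by omega) (by omega)) (by omega) (by omega)
  split_ifs <;> omega

theorem card_notMem_Icc_six_eight_of_zero_notMem {u v : α} (huv : u ≠ v)
    (h : IsIrregularPair R B {u, v} p q) (hu : p u + q u = 1) (hv : p v + q v = 1)
    (h0 : 0 ∉ degreeSet R {u, v}) : Fintype.card α ∉ Set.Icc 6 8 := by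
  rintro ⟨h6, h8⟩
  have hcard := h.card_degreeSet
  rw [card_pair huv] at hcard
  generalize hn : Fintype.card α = n at h6 h8 hcard
  obtain ⟨m, hm, hD⟩ : ∃ m ∉ degreeSet R {u, v}, insert m (degreeSet R {u, v}) = Ico 1 n :=
    exists_eq_insert_iff.2 ⟨hn ▸ degreeSet_subset R h0, by rw [Nat.card_Ico]; omega⟩
  obtain ⟨hm1, hmn⟩ : 1 ≤ m ∧ m < n := mem_Ico.1 (hD ▸ mem_insert_self m _)
  have he := card_filter_adj_le_sub_one R (mem_insert_self u {v})
  rw [card_pair huv] at he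
  obtain ⟨θ, hθ⟩ := exists_threshold_of_insert_eq R (card_pair huv) h.injOn_degree hm hD he h6
  rw [sum_pair huv] at hθ
  have hne := h.red_degree_ne huv (hu.trans hv.symm)
  have hdefectu := h.two_le_defect_or hD (mem_insert_self u _) hu (θ := θ) rfl
    (by omega) (by omega) (by omega) (by omega)
  have hdefectv := h.two_le_defect_or hD (mem_insert_of_mem (mem_singleton_self v)) hv
    (θ := θ) (congrArg (_ + ·) (card_filter_pair_adj R u v).symm)
    (by omega) (by omega) (by omega) (by omega)
  split_ifs at hdefectu hdefectv <;> omega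

theorem card_notMem_Icc_six_eight {u v : α} (huv : u ≠ v) (h : IsIrregularPair R B {u, v} p q)
    (hu : p u + q u = 1) (hv : p v + q v = 1) : Fintype.card α ∉ Set.Icc 6 8 := by
  have : Nontrivial α := ⟨u, v, huv⟩
  rcases h.zero_notMem_degreeSet_or with h0 | h0
  · exact card_notMem_Icc_six_eight_of_zero_notMem huv h hu hv h0
  · exact card_notMem_Icc_six_eight_of_zero_notMem huv h.symm ((add_comm _ _).trans hu)
      ((add_comm _ _).trans hv) h0

end IsIrregularPair

end IrregularPair

section Coloring

variable {V : Type*} {G : SimpleGraph V} {X : Finset V} {c : Sym2 V → Fin 2}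

/-- The spanning subgraph of `G` formed by the edges of color `i`. -/
def colorClass (G : SimpleGraph V) (c : Sym2 V → Fin 2) (i : Fin 2) : SimpleGraph V where
  Adj u w := G.Adj u w ∧ c s(u, w) = i
  symm := ⟨fun _ _ h ↦ ⟨h.1.symm, Sym2.eq_swap.symm ▸ h.2⟩⟩
  loopless := ⟨fun _ h ↦ G.irrefl h.1⟩

/-- The number of neighbors of `u` outside `X`. -/
noncomputable def outerDegree (G : SimpleGraph V) (X : Finset V) (u : V) : ℕ :=
  {w | G.Adj u w ∧ w ∉ X}.ncard

theorem finite_neighborSet_colorClass {u : V} (hfin : (G.neighborSet u).Finite) (i : Fin 2) :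
    ((colorClass G c i).neighborSet u).Finite :=
  hfin.subset fun _ h ↦ h.1

theorem ndeg_eq_ncard_inter_add_outerDegree {u : V} (hfin : (G.neighborSet u).Finite) :
    ndeg G u = (G.neighborSet u ∩ X).ncard + outerDegree G X u :=
  (Set.ncard_inter_add_ncard_sdiff_eq_ncard _ _ hfin).symm

theorem ndeg_eq_degree_induce_add_outerDegree {u : V} (hu : u ∈ X)
    (hfin : (G.neighborSet u).Finite) [DecidableRel (G.induce (X : Set V)).Adj] :
    ndeg G u = (G.induce (X : Set V)).degree ⟨u, hu⟩ + outerDegree G X u := by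
  have hinner :
      G.neighborSet u ∩ X = Subtype.val '' (G.induce (X : Set V)).neighborSet ⟨u, hu⟩ := by
    ext w
    simp [and_comm]
  rw [ndeg_eq_ncard_inter_add_outerDegree hfin, hinner,
    Set.ncard_image_of_injective _ Subtype.val_injective, ← SimpleGraph.card_neighborSet_eq_degree,
    ← Nat.card_eq_fintype_card, Nat.card_coe_set_eq]

theorem ndeg_add_one_eq (hclique : G.IsClique X) {u : V} (hu : u ∈ X)
    (hfin : (G.neighborSet u).Finite) : ndeg G u + 1 = #X + outerDegree G X u := by
  have hinner : G.neighborSet u ∩ X = (X : Set V) \ {u} :=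
    Set.ext fun w ↦ ⟨fun h ↦ ⟨h.2, h.1.ne'⟩, fun h ↦ ⟨hclique hu h.1 (Ne.symm h.2), h.1⟩⟩
  rw [ndeg_eq_ncard_inter_add_outerDegree hfin, hinner, add_right_comm,
    Set.ncard_sdiff_singleton_add_one (mem_coe.2 hu) X.finite_toSet, Set.ncard_coe_finset]

theorem outerDegree_colorClass_add {u : V} (hfin : (G.neighborSet u).Finite) :
    outerDegree (colorClass G c 0) X u + outerDegree (colorClass G c 1) X u =
      outerDegree G X u := by
  have hsplit := Set.ncard_inter_add_ncard_sdiff_eq_ncard {w | G.Adj u w ∧ w ∉ X}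
    {w | c s(u, w) = 0} (hfin.subset fun _ h ↦ h.1)
  rw [outerDegree, outerDegree, outerDegree, ← hsplit]
  congr 2 <;> ext w
  · exact and_right_comm
  · have hcolor : c s(u, w) = 1 ↔ ¬ c s(u, w) = 0 := by omega
    simp only [colorClass, Set.mem_ofPred_eq, Set.mem_sdiff, hcolor]
    exact and_right_comm

theorem isCompl_induce_colorClass (hclique : G.IsClique X) :
    IsCompl ((colorClass G c 0).induce (X : Set V)) ((colorClass G c 1).induce (X : Set V)) := by
  have hcompl : (colorClass G c 1).induce (X : Set V) =
      ((colorClass G c 0).induce (X : Set V))ᶜ := by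
    ext u w
    have hadj : u ≠ w → G.Adj u w := fun hne ↦ hclique u.2 w.2 (Subtype.coe_ne_coe.2 hne)
    have hne : G.Adj u w → u ≠ w := fun h heq ↦ h.ne (congrArg _ heq)
    have hcolor : c s(↑u, ↑w) = 1 ↔ ¬ c s(↑u, ↑w) = 0 := by omega
    simp only [colorClass, SimpleGraph.compl_adj, SimpleGraph.comap_adj,
      Function.Embedding.subtype_apply]
    tauto
  exact hcompl ▸ isCompl_compl

namespace IsLiec2

theorem ndeg_colorClass_ne (hc : IsLiec2 G c) {i : Fin 2} {u w : V}
    (h : (colorClass G c i).Adj u w) :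
    ndeg (colorClass G c i) u ≠ ndeg (colorClass G c i) w := by
  obtain ⟨hadj, rfl⟩ := h
  exact hc u w hadj

open Classical in
theorem isIrregularPair (hc : IsLiec2 G c) (hclique : G.IsClique X)
    (hfin : ∀ u ∈ X, (G.neighborSet u).Finite) {S : Finset (X : Set V)}
    (hS : ∀ w ∉ S, outerDegree G X w = 0) :
    IsIrregularPair ((colorClass G c 0).induce (X : Set V)) ((colorClass G c 1).induce (X : Set V))
      S (fun w ↦ outerDegree (colorClass G c 0) X w)
      (fun w ↦ outerDegree (colorClass G c 1) X w) := by
  have hne (i : Fin 2) ⦃u w : (X : Set V)⦄ (hadj : (colorClass G c i).Adj u w) :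
      ((colorClass G c i).induce (X : Set V)).degree u + outerDegree (colorClass G c i) X u ≠
        ((colorClass G c i).induce (X : Set V)).degree w + outerDegree (colorClass G c i) X w := by
    have h := hc.ndeg_colorClass_ne hadj
    rwa [ndeg_eq_degree_induce_add_outerDegree u.2 (finite_neighborSet_colorClass (hfin u u.2) i),
      ndeg_eq_degree_induce_add_outerDegree w.2 (finite_neighborSet_colorClass (hfin w w.2) i)] at h
  have hsum (w : (X : Set V)) := outerDegree_colorClass_add (c := c) (X := X) (hfin w w.2)
  refine ⟨isCompl_induce_colorClass hclique, hne 0, hne 1, fun w hw ↦ ?_, fun w hw ↦ ?_⟩ <;>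
  · have hw0 := hS w hw
    have := hsum w
    omega

theorem half_card_le_outerDegree (hc : IsLiec2 G c) (hclique : G.IsClique X)
    (hfin : ∀ u ∈ X, (G.neighborSet u).Finite) {u : V} (hu : u ∈ X)
    (h : ∀ w ∈ X, w ≠ u → outerDegree G X w = 0) : #X / 2 ≤ outerDegree G X u := by
  classical
  have hpair := hc.isIrregularPair hclique hfin (S := {⟨u, hu⟩}) fun w hw ↦
    h w w.2 fun hwu ↦ hw (mem_singleton.2 (Subtype.ext hwu))
  rw [← outerDegree_colorClass_add (c := c) (hfin u hu), ← Fintype.card_coe X]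
  exact hpair.half_card_le

theorem card_notMem_Icc_six_eight (hc : IsLiec2 G c) (hclique : G.IsClique X)
    (hfin : ∀ u ∈ X, (G.neighborSet u).Finite) {u v : V} (hu : u ∈ X) (hv : v ∈ X) (huv : u ≠ v)
    (hdu : outerDegree G X u = 1) (hdv : outerDegree G X v = 1)
    (h : ∀ w ∈ X, w ≠ u → w ≠ v → outerDegree G X w = 0) : #X ∉ Set.Icc 6 8 := by
  classical
  have hpair := hc.isIrregularPair hclique hfin (S := {⟨u, hu⟩, ⟨v, hv⟩}) fun w hw ↦ by
    simp only [mem_insert, mem_singleton, Subtype.ext_iff, not_or] at hw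
    exact h w w.2 hw.1 hw.2
  rw [← Fintype.card_coe X]
  exact hpair.card_notMem_Icc_six_eight (fun heq ↦ huv (congrArg Subtype.val heq))
    ((outerDegree_colorClass_add (hfin u hu)).trans hdu)
    ((outerDegree_colorClass_add (hfin v hv)).trans hdv)

end IsLiec2

end Coloring

section Path

theorem IsLiec2.comap {V W : Type*} {G : SimpleGraph V} {H : SimpleGraph W} {c : Sym2 V → Fin 2}
    (hc : IsLiec2 G c) (e : H ≃g G) : IsLiec2 H (c ∘ Sym2.map e) := by
  have hcdeg (i : Fin 2) (w : W) : cdeg H (c ∘ Sym2.map e) i w = cdeg G c i (e w) := by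
    rw [cdeg, cdeg, ← Set.ncard_preimage_of_injective_subset_range e.injective
      fun x _ ↦ e.surjective x]
    simp only [← e.map_adj_iff, Set.preimage_ofPred_eq, Function.comp_apply, Sym2.map_mk]
  intro u w h
  rw [hcdeg, hcdeg]
  exact hc _ _ (e.map_adj_iff.2 h)

theorem not_isLiec2_pathGraph_four (c : Sym2 (Fin 4) → Fin 2) :
    ¬ IsLiec2 (SimpleGraph.pathGraph 4) c := by
  intro hc
  have hcdeg (i : Fin 2) (u : Fin 4) : cdeg (SimpleGraph.pathGraph 4) c i u =
      ∑ w : Fin 4, if (u.val + 1 = w ∨ w.val + 1 = u) ∧ c s(u, w) = i then 1 else 0 := by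
    rw [cdeg, ← card_filter, ← Set.ncard_coe_finset, coe_filter_univ]
    simp only [SimpleGraph.pathGraph_adj]
  have h01 : c s(1, 2) = c s(0, 1) := by
    simpa [hcdeg, Fin.sum_univ_four, Sym2.eq_swap, -sum_boole] using
      hc 0 1 (by simp [SimpleGraph.pathGraph_adj])
  have h23 : c s(1, 2) = c s(2, 3) := by
    simpa [hcdeg, Fin.sum_univ_four, Sym2.eq_swap, -sum_boole] using
      hc 2 3 (by simp [SimpleGraph.pathGraph_adj])
  refine hc 1 2 (by simp [SimpleGraph.pathGraph_adj]) ?_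
  simp [hcdeg, Fin.sum_univ_four, Sym2.eq_swap, -sum_boole, ← h01, ← h23]

end Path

section Enumeration

variable {V : Type*} {G : SimpleGraph V} {X : Finset V} {n : ℕ} {v : ℕ → V}

theorem antitoneOn_outerDegree (hclique : G.IsClique X) (hfin : ∀ u ∈ X, (G.neighborSet u).Finite)
    (hX : Set.MapsTo v (Set.Icc 1 n) X)
    (hmono : ∀ i j : ℕ, 1 ≤ i → i ≤ j → j ≤ n → ndeg G (v j) ≤ ndeg G (v i)) :
    AntitoneOn (fun i ↦ outerDegree G X (v i)) (Set.Icc 1 n) := by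
  intro i hi j hj hij
  have hle := hmono i j hi.1 hij hj.2
  have hndegi := ndeg_add_one_eq hclique (hX hi) (hfin _ (hX hi))
  have hndegj := ndeg_add_one_eq hclique (hX hj) (hfin _ (hX hj))
  dsimp only
  omega

theorem outerDegree_eq_zero_of_forall_ne (hX : v '' Set.Icc 1 n = X)
    (hanti : AntitoneOn (fun i ↦ outerDegree G X (v i)) (Set.Icc 1 n)) {k : ℕ}
    (hk : k ∈ Set.Icc 1 n) (hk0 : outerDegree G X (v k) = 0) {w : V} (hw : w ∈ X)
    (hne : ∀ i ∈ Set.Ico 1 k, w ≠ v i) : outerDegree G X w = 0 := by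
  obtain ⟨j, hj, rfl⟩ : w ∈ v '' Set.Icc 1 n := hX ▸ hw
  exact Nat.le_zero.1 (hk0 ▸ hanti hk hj (not_lt.1 fun hjk ↦ hne j ⟨hj.1, hjk⟩ rfl))

end Enumeration

theorem split_graphs_no_liec_general {V : Type*} (G : SimpleGraph V)
    (X : Finset V) (hclique : G.IsClique ↑X) (hfin : ∀ u ∈ X, (G.neighborSet u).Finite)
    (n : ℕ) (hn : n = X.card)
    (v : ℕ → V) (hinj : Set.InjOn v (Set.Icc 1 n))
    (himg : v '' Set.Icc 1 n = ↑X)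
    (hmono : ∀ i j : ℕ, 1 ≤ i → i ≤ j → j ≤ n → ndeg G (v j) ≤ ndeg G (v i))
    (d : ℕ → ℕ) (hd : ∀ i, d i = {w | G.Adj (v i) w ∧ w ∉ X}.ncard)
    (hcase :
      Nonempty (G ≃g SimpleGraph.pathGraph 4) ∨
      (d 1 < n / 2 ∧ d 2 = 0) ∨
      (6 ≤ n ∧ n ≤ 8 ∧ d 1 = 1 ∧ d 2 = 1 ∧ d 3 = 0)) :
    ¬ ∃ c : Sym2 V → Fin 2, IsLiec2 G c := by
  rintro ⟨c, hc⟩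
  obtain rfl : d = fun i ↦ outerDegree G X (v i) := funext hd
  have hX : Set.MapsTo v (Set.Icc 1 n) X := himg ▸ Set.mapsTo_image v _
  have hanti := antitoneOn_outerDegree hclique hfin hX hmono
  have hzero {k : ℕ} (hk : k ∈ Set.Icc 1 n) := outerDegree_eq_zero_of_forall_ne himg hanti hk
  rcases hcase with ⟨⟨e⟩⟩ | ⟨h1, h2⟩ | ⟨h6, h8, h1, h2, h3⟩
  · exact not_isLiec2_pathGraph_four _ (hc.comap e.symm)
  · have hhalf := hc.half_card_le_outerDegree hclique hfin (hX ⟨le_rfl, by omega⟩)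
      fun w hw hw1 ↦ hzero ⟨by omega, by omega⟩ h2 hw fun i hi ↦ by
        obtain rfl : i = 1 := Nat.le_antisymm (Nat.le_of_lt_succ hi.2) hi.1
        exact hw1
    exact h1.not_ge (hn ▸ hhalf)
  · have h12 : v 1 ≠ v 2 := hinj.ne ⟨le_rfl, by omega⟩ ⟨by omega, by omega⟩ (by omega)
    refine hc.card_notMem_Icc_six_eight hclique hfin (hX ⟨le_rfl, by omega⟩)
      (hX ⟨by omega, by omega⟩) h12 h1 h2
      (fun w hw hw1 hw2 ↦ hzero ⟨by omega, by omega⟩ h3 hw fun i ⟨hi1, hi3⟩ ↦ ?_)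
      (hn ▸ ⟨h6, h8⟩)
    obtain rfl | rfl : i = 1 ∨ i = 2 := by omega
    exacts [hw1, hw2]

/-- Split graphs with a maximum clique `X = {v_1, …, v_n}` (degrees nonincreasing) and
independent set `Y = V \ X`, with `d_i = |N(v_i) ∩ Y|`, that belong to one of the seven
listed families admit no 2-liec. -/
theorem split_graphs_no_liec {V : Type*} [Fintype V] (G : SimpleGraph V)
    (hnotcomplete : G ≠ ⊤)
    (X : Finset V) (hclique : G.IsClique ↑X)
    (hmax : ∀ Z : Finset V, G.IsClique ↑Z → Z.card ≤ X.card)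
    (hindep : ∀ u ∉ X, ∀ w ∉ X, ¬ G.Adj u w)
    (n : ℕ) (hn : n = X.card)
    (v : ℕ → V) (hinj : Set.InjOn v (Set.Icc 1 n))
    (himg : v '' Set.Icc 1 n = ↑X)
    (hmono : ∀ i j : ℕ, 1 ≤ i → i ≤ j → j ≤ n → ndeg G (v j) ≤ ndeg G (v i))
    (d : ℕ → ℕ) (hd : ∀ i, d i = {w | G.Adj (v i) w ∧ w ∉ X}.ncard)
    (hcase :
      Nonempty (G ≃g SimpleGraph.pathGraph 4) ∨
      (4 ≤ n ∧ n ≤ 10 ∧ d 1 = 1 ∧ d 2 = 0) ∨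
      (6 ≤ n ∧ n ≤ 10 ∧ d 1 = 2 ∧ d 2 = 0) ∨
      (8 ≤ n ∧ n ≤ 10 ∧ d 1 = 3 ∧ d 2 = 0) ∨
      (6 ≤ n ∧ n ≤ 8 ∧ d 1 = 1 ∧ d 2 = 1 ∧ d 3 = 0) ∨
      (n = 10 ∧ d 1 = 4 ∧ d 2 = 0) ∨
      (11 ≤ n ∧ d 1 < n / 2 ∧ d 2 = 0)) :
    ¬ ∃ c : Sym2 V → Fin 2, IsLiec2 G c :=
  split_graphs_no_liec_general G X hclique (fun _ _ ↦ Set.toFinite _) n hn v hinj himg hmono d hd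
    (hcase.imp_right fun h ↦ by omega)
end

section
/- For every integer k ≥ 4 and every integer n ≥ 2k + 2, there exist nonnegative integers p, q and an integer t with p + q ≥ 2, k ≤ t ≤ ⌊(8k - 5)/5⌋, and n = p(t + 1) + q(t + 2). -/
/-!
Splitting `n` into `m` parts as evenly as possible gives parts of sizes `s` and `s + 1`, and these
can be kept in `[a, b]` as soon as `m * a ≤ n ≤ m * b`. The intervals `[m * a, m * b]` get longer
as `m` grows, so once two consecutive ones leave no gap, none do from there on, and they cover
every large `n`. Here `a = k + 1`, `b = ⌊(8k - 5)/5⌋ + 2`, and there is no gap from `m = 2` on.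
-/

theorem exists_eq_mul_add_mul_succ {m a b n : ℕ} (hab : a < b)
    (han : m * a ≤ n) (hnb : n ≤ m * b) :
    ∃ p q s : ℕ, p + q = m ∧ a ≤ s ∧ s < b ∧ n = p * s + q * (s + 1) := by
  rcases hnb.eq_or_lt with rfl | hlt
  · obtain ⟨s, rfl⟩ := Nat.exists_eq_succ_of_ne_zero hab.ne_bot
    exact ⟨0, m, s, by omega, by omega, by omega, by simp⟩
  · have hm : 0 < m := Nat.pos_of_mul_pos_right (Nat.zero_lt_of_lt hlt)
    have hmod : m - n % m + n % m = m := Nat.sub_add_cancel (Nat.mod_lt n hm).le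
    refine ⟨m - n % m, n % m, n / m, hmod, (Nat.le_div_iff_mul_le hm).2 (by rwa [mul_comm]),
      Nat.div_lt_of_lt_mul hlt, ?_⟩
    calc
      n = m * (n / m) + n % m := (Nat.div_add_mod n m).symm
      _ = (m - n % m + n % m) * (n / m) + n % m := by rw [hmod]
      _ = (m - n % m) * (n / m) + n % m * (n / m + 1) := by ring

theorem exists_mul_le_and_le_mul {l a b n : ℕ} (ha : 0 < a) (hab : a ≤ b)
    (hgap : (l + 1) * a ≤ l * b + 1) (hn : l * a ≤ n) :
    ∃ m, l ≤ m ∧ m * a ≤ n ∧ n ≤ m * b := by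
  have hlm : l ≤ n / a := (Nat.le_div_iff_mul_le ha).2 hn
  obtain ⟨d, rfl⟩ := Nat.exists_eq_add_of_le hab
  have hd : a ≤ l * d + 1 := by linarith
  refine ⟨n / a, hlm, Nat.div_mul_le_self n a, ?_⟩
  rw [← Nat.lt_add_one_iff]
  calc
    n < n / a * a + a := Nat.lt_div_mul_add ha
    _ ≤ n / a * a + (l * d + 1) := by gcongr
    _ ≤ n / a * a + (n / a * d + 1) := by gcongr
    _ = n / a * (a + d) + 1 := by ring

theorem representation_p_q_t_general {l k T n : ℕ}
    (hgap : (l + 1) * (k + 1) ≤ l * (T + 2) + 1) (hn : l * (k + 1) ≤ n) :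
    ∃ p q t : ℕ, l ≤ p + q ∧ k ≤ t ∧ t ≤ T ∧ n = p * (t + 1) + q * (t + 2) := by
  have hkT : k + 1 < T + 2 := by
    by_contra! hTk
    have : l * (T + 2) ≤ l * (k + 1) := Nat.mul_le_mul_left l hTk
    linarith
  obtain ⟨m, hlm, hkn, hnT⟩ := exists_mul_le_and_le_mul k.succ_pos hkT.le hgap hn
  obtain ⟨p, q, s, rfl, hks, hsT, hpq⟩ := exists_eq_mul_add_mul_succ hkT hkn hnT
  obtain ⟨t, rfl⟩ := Nat.exists_eq_add_of_le' (Nat.le_of_add_left_le hks)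
  exact ⟨p, q, t, hlm, by omega, by omega, hpq⟩

/-- For every `k ≥ 4` and `n ≥ 2k + 2` there are nonnegative integers `p`, `q` and an
integer `t` with `p + q ≥ 2`, `k ≤ t ≤ ⌊(8k - 5)/5⌋`, and `n = p(t+1) + q(t+2)`. -/
theorem representation_p_q_t (k n : ℕ) (hk : 4 ≤ k) (hn : 2 * k + 2 ≤ n) :
    ∃ p q t : ℕ, 2 ≤ p + q ∧ k ≤ t ∧ t ≤ (8 * k - 5) / 5 ∧
      n = p * (t + 1) + q * (t + 2) :=
  representation_p_q_t_general (l := 2) (hgap := by omega) (hn := by omega)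
end

section
/- If G is a connected almost irregular graph of order n ≥ 2, then two distinct vertices u and v of G are adjacent if and only if deg(u) + deg(v) ≥ n. -/
/-- A graph is almost irregular if there is exactly one unordered pair of distinct
vertices having equal degrees (all other degrees are pairwise distinct and different
from the repeated one). -/
def AlmostIrregular {V : Type*} (G : SimpleGraph V) : Prop :=
  ∃ u v : V, u ≠ v ∧ ndeg G u = ndeg G v ∧
    ∀ x y : V, x ≠ y → ndeg G x = ndeg G y → ((x = u ∧ y = v) ∨ (x = v ∧ y = u))

/-!
With `n` vertices, a connected graph has all its degrees in `[1, n - 1]`, so an almost irregular one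
realizes each of these values. Compare `G` with the graph `H` joining distinct `u`, `v` when
`deg u + deg v ≥ n`. As every value is realized, `deg_H v ≤ deg_G v` if `deg_G v ≥ n / 2` and
`deg_G v ≤ deg_H v` otherwise. Visiting vertices by degree in the order `n - 1, 1, n - 2, 2, …`,
the earlier vertices give one inclusion between the neighborhoods of `v` in `G` and in `H`, and
these inequalities make it an equality.
-/

theorem ncard_le_ncard_preimage_of_subset_range {α β : Type*} [Finite α] {f : α → β} {s : Set β}
    (hs : s ⊆ Set.range f) : s.ncard ≤ (f ⁻¹' s).ncard := by
  conv_lhs => rw [← Set.image_preimage_eq_of_subset hs]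
  exact Set.ncard_image_le

section

variable {V : Type*} {G : SimpleGraph V}

theorem AlmostIrregular.exists_injOn_ndeg_compl_singleton (hG : AlmostIrregular G) :
    ∃ u, Set.InjOn (ndeg G) {u}ᶜ := by
  obtain ⟨u, v, -, -, huniq⟩ := hG
  refine ⟨u, fun x hx y hy hxy ↦ by_contra fun hne ↦ ?_⟩
  rcases huniq x y hne hxy with ⟨hxu, -⟩ | ⟨-, hyu⟩
  · exact hx hxu
  · exact hy hyu

/-- The graph on the vertices of `G` joining distinct vertices whose degrees in `G` sum to at least
the order of `G`; almost irregular graphs are compared with it. `Nat.card` makes it independent of a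
`Fintype` instance. -/
def degreeSumGraph (G : SimpleGraph V) : SimpleGraph V where
  Adj u v := u ≠ v ∧ Nat.card V ≤ ndeg G u + ndeg G v
  symm := ⟨fun u v h ↦ ⟨h.1.symm, add_comm (ndeg G u) (ndeg G v) ▸ h.2⟩⟩
  loopless := ⟨fun _ h ↦ h.1 rfl⟩

variable [Finite V]

theorem ndeg_pos_of_preconnected [Nontrivial V] (hG : G.Preconnected) (v : V) : 0 < ndeg G v :=
  (Set.ncard_pos).2 (hG.exists_adj_of_nontrivial v)

theorem ndeg_lt_card (G : SimpleGraph V) (v : V) : ndeg G v < Nat.card V :=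
  Set.ncard_lt_card fun h ↦ G.irrefl (Set.eq_univ_iff_forall.1 h v)

theorem AlmostIrregular.Ioo_subset_range_ndeg (hG : AlmostIrregular G)
    (hpos : ∀ v, 0 < ndeg G v) : Set.Ioo 0 (Nat.card V) ⊆ Set.range (ndeg G) := by
  obtain ⟨u, hinj⟩ := hG.exists_injOn_ndeg_compl_singleton
  have himage : ndeg G '' {u}ᶜ ⊆ Set.Ioo 0 (Nat.card V) := by
    rintro _ ⟨v, -, rfl⟩
    exact ⟨hpos v, ndeg_lt_card G v⟩
  have hcard : (Set.Ioo 0 (Nat.card V)).ncard ≤ (ndeg G '' {u}ᶜ).ncard := by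
    rw [hinj.ncard_image, Set.ncard_compl, Set.ncard_singleton]
    simp
  rw [← Set.eq_of_subset_of_ncard_le himage hcard]
  exact Set.image_subset_range _ _

theorem ndeg_degreeSumGraph_le (hG : Set.Ioo 0 (Nat.card V) ⊆ Set.range (ndeg G)) {v : V}
    (hv : Nat.card V ≤ 2 * ndeg G v) : ndeg (degreeSumGraph G) v ≤ ndeg G v := by
  let low : Set V := ndeg G ⁻¹' Set.Ioo 0 (Nat.card V - ndeg G v)
  have hlow : Nat.card V - ndeg G v - 1 ≤ low.ncard := by
    simpa using ncard_le_ncard_preimage_of_subset_range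
      ((Set.Ioo_subset_Ioo_right (Nat.sub_le _ (ndeg G v))).trans hG)
  have hv_low : v ∉ low := by
    rintro ⟨-, hlt⟩
    omega
  have hsub : {w | (degreeSumGraph G).Adj v w} ⊆ (insert v low)ᶜ := by
    rintro w ⟨hne, hsum⟩ (rfl | hw)
    · exact hne rfl
    · have := hw.2
      omega
  have hcard : ndeg (degreeSumGraph G) v ≤ (insert v low)ᶜ.ncard := Set.ncard_le_ncard hsub
  rw [Set.ncard_compl, Set.ncard_insert_of_notMem hv_low] at hcard
  omega

theorem ndeg_le_ndeg_degreeSumGraph (hG : Set.Ioo 0 (Nat.card V) ⊆ Set.range (ndeg G)) {v : V}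
    (hv : 2 * ndeg G v < Nat.card V) : ndeg G v ≤ ndeg (degreeSumGraph G) v := by
  let high : Set V := ndeg G ⁻¹' Set.Ico (Nat.card V - ndeg G v) (Nat.card V)
  have hsub : high ⊆ {w | (degreeSumGraph G).Adj v w} := by
    rintro w ⟨hw, -⟩
    exact ⟨by rintro rfl; omega, by omega⟩
  have hIco : Set.Ico (Nat.card V - ndeg G v) (Nat.card V) ⊆ Set.Ioo 0 (Nat.card V) :=
    fun m hm ↦ ⟨(show 0 < Nat.card V - ndeg G v by omega).trans_le hm.1, hm.2⟩
  calc
    ndeg G v = (Set.Ico (Nat.card V - ndeg G v) (Nat.card V)).ncard := by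
      rw [Set.ncard_Ico_nat]
      omega
    _ ≤ high.ncard := ncard_le_ncard_preimage_of_subset_range (hIco.trans hG)
    _ ≤ ndeg (degreeSumGraph G) v := Set.ncard_le_ncard hsub

theorem eq_degreeSumGraph (hG : Set.Ioo 0 (Nat.card V) ⊆ Set.range (ndeg G)) :
    G = degreeSumGraph G := by
  -- Degrees `n - 1, 1, n - 2, 2, …` get the ranks `2, 3, 4, 5, …`.
  let rank (v : V) : ℕ := min (2 * (Nat.card V - ndeg G v)) (2 * ndeg G v + 1)
  suffices hnbr : ∀ v, {w | G.Adj v w} = {w | (degreeSumGraph G).Adj v w} from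
    SimpleGraph.ext <| funext hnbr
  intro v
  induction hr : rank v using Nat.strong_induction_on generalizing v with
  | _ r ih =>
    subst hr
    have hagree {w : V} (hw : rank w < rank v) : G.Adj v w ↔ (degreeSumGraph G).Adj v w := by
      rw [G.adj_comm, (degreeSumGraph G).adj_comm]
      exact Set.ext_iff.1 (ih _ hw w rfl) v
    rcases le_or_gt (Nat.card V) (2 * ndeg G v) with hv | hv
    · refine Set.eq_of_subset_of_ncard_le (fun w hvw ↦ ?_) (ndeg_degreeSumGraph_le hG hv)
      by_cases hsum : Nat.card V ≤ ndeg G v + ndeg G w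
      · exact ⟨G.ne_of_adj hvw, hsum⟩
      · have hrank : rank w < rank v := by grind
        exact (hagree hrank).1 hvw
    · refine (Set.eq_of_subset_of_ncard_le (fun w hvw ↦ ?_)
        (ndeg_le_ndeg_degreeSumGraph hG hv)).symm
      have hsum := hvw.2
      have hrank : rank w < rank v := by grind
      exact (hagree hrank).2 hvw

end

/-- In a connected almost irregular graph of order `n ≥ 2`, two distinct vertices are
adjacent if and only if the sum of their degrees is at least `n`. -/
theorem connected_almost_irregular_adj_iff {V : Type*} [Fintype V] (G : SimpleGraph V)
    (hn : 2 ≤ Fintype.card V) (hconn : G.Connected) (hai : AlmostIrregular G) :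
    ∀ u v : V, u ≠ v → (G.Adj u v ↔ Fintype.card V ≤ ndeg G u + ndeg G v) := by
  intro u v huv
  have : Nontrivial V := Fintype.one_lt_card_iff_nontrivial.1 hn
  have hrange := hai.Ioo_subset_range_ndeg (ndeg_pos_of_preconnected hconn.preconnected)
  calc
    G.Adj u v ↔ (degreeSumGraph G).Adj u v := by rw [← eq_degreeSumGraph hrange]
    _ ↔ Nat.card V ≤ ndeg G u + ndeg G v := and_iff_right huv
    _ ↔ Fintype.card V ≤ ndeg G u + ndeg G v := by rw [Nat.card_eq_fintype_card]
end

section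
/- If G is a connected almost irregular graph of order n ≥ 2, then G contains exactly two vertices of degree ⌊n/2⌋ and exactly one vertex of each degree in {1, ..., n-1} \ {⌊n/2⌋}. -/
/-!
Let `v` be one of the two vertices of equal degree, let `n` be the order and `m = ⌊n/2⌋`. Without
isolated vertices the other `n - 1` vertices have the degrees `1, …, n - 1`, each once. Let `H` be
the set of the `m` largest among them. The degrees in `H` exceed those outside `H ∪ {v}` by `m²` in
total, so the Erdős–Gallai inequality for `H` gives `m ≤ deg v` and the one for `H ∪ {v}` gives
`deg v ≤ m`.
-/

open Finset

theorem sum_filter_comp_of_bijOn {α β M : Type*} [AddCommMonoid M] {s : Finset α} {t : Finset β}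
    {f : α → β} (hf : Set.BijOn f s t) (p : β → Prop) [DecidablePred p] (g : β → M) :
    ∑ x ∈ s with p (f x), g (f x) = ∑ y ∈ t with p y, g y := by
  simp only [sum_filter]
  exact sum_nbij f hf.mapsTo hf.injOn hf.surjOn fun _ _ => rfl

theorem ncard_fiber_of_bijOn_compl_singleton {α β : Type*} [DecidableEq β] {f : α → β} {a : α}
    {t : Set β} (hf : Set.BijOn f {a}ᶜ t) {b : β} (hb : b ∈ t) :
    {x | f x = b}.ncard = if f a = b then 2 else 1 := by
  obtain ⟨c, hca, rfl⟩ := hf.surjOn hb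
  have hfiber {x : α} (hxa : x ≠ a) : f x = f c ↔ x = c := hf.injOn.eq_iff hxa hca
  split_ifs with ha
  · refine Set.ncard_eq_two.2 ⟨c, a, hca, Set.ext fun x => ?_⟩
    rcases eq_or_ne x a with rfl | hxa
    · simp [ha]
    · simp [hfiber hxa, hxa]
  · refine Set.ncard_eq_one.2 ⟨c, Set.ext fun x => ?_⟩
    rcases eq_or_ne x a with rfl | hxa
    · simp [ha, Ne.symm hca]
    · simp [hfiber hxa]

theorem sum_Ico_sub_div_two (n : ℕ) :
    ∑ d ∈ Ico (n - n / 2) n, d = (n / 2) ^ 2 + ∑ d ∈ range (n - n / 2), d := by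
  obtain ⟨m, rfl | rfl⟩ := n.even_or_odd'
  · have hm : 2 * m / 2 = m := by lia
    have hsub : 2 * m - m = m := by lia
    rw [hm, hsub, sum_Ico_eq_sum_range, hsub, sum_add_distrib, sum_const, card_range, smul_eq_mul,
      sq]
  · have hm : (2 * m + 1) / 2 = m := by lia
    have hsub : 2 * m + 1 - m = m + 1 := by lia
    have hlen : 2 * m + 1 - (m + 1) = m := by lia
    rw [hm, hsub, sum_Ico_eq_sum_range, hlen, sum_add_distrib, sum_const, card_range, smul_eq_mul,
      sum_range_succ]
    ring

section Degree

theorem ndeg_eq_degree {V : Type*} (G : SimpleGraph V) (v : V) [Fintype (G.neighborSet v)] :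
    ndeg G v = G.degree v :=
  Set.ncard_eq_toFinset_card' (G.neighborSet v)

variable {V : Type*} {G : SimpleGraph V}

theorem AlmostIrregular.exists_injOn_compl_singleton (hG : AlmostIrregular G) :
    ∃ v, Set.InjOn (ndeg G) {v}ᶜ := by
  obtain ⟨u, v, -, -, huniq⟩ := hG
  refine ⟨v, fun x hx y hy hxy => by_contra fun hne => ?_⟩
  rcases huniq x y hne hxy with ⟨-, rfl⟩ | ⟨rfl, -⟩
  exacts [hy rfl, hx rfl]

theorem AlmostIrregular.nontrivial (hG : AlmostIrregular G) : Nontrivial V :=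
  let ⟨u, v, huv, _⟩ := hG
  ⟨u, v, huv⟩

variable [Fintype V] [DecidableRel G.Adj]

section ErdosGallai

variable [DecidableEq V] (G)

theorem sum_degree_eq_sum_card_neighborFinset_inter (S : Finset V) :
    ∑ x ∈ S, G.degree x = ∑ y, #(G.neighborFinset y ∩ S) := by
  have h := sum_card_bipartiteAbove_eq_sum_card_bipartiteBelow (s := S) (t := univ) G.Adj
  simp only [bipartiteAbove, bipartiteBelow, ← SimpleGraph.neighborFinset_eq_filter,
    SimpleGraph.card_neighborFinset_eq_degree] at h
  rw [h]
  congr! 2 with y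
  ext x
  simp [G.adj_comm, and_comm]

theorem erdos_gallai_inequality (S : Finset V) :
    ∑ x ∈ S, G.degree x ≤ #S * (#S - 1) + ∑ y ∈ Sᶜ, min (G.degree y) #S := by
  have hmem : ∀ y ∈ S, #(G.neighborFinset y ∩ S) ≤ #S - 1 := fun y hy => by
    rw [← card_erase_of_mem hy]
    refine card_le_card fun x hx => ?_
    obtain ⟨hyx, hxS⟩ := mem_inter.1 hx
    exact mem_erase.2 ⟨((G.mem_neighborFinset y x).1 hyx).ne', hxS⟩
  have hmin : ∀ y, #(G.neighborFinset y ∩ S) ≤ min (G.degree y) #S := fun y =>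
    le_min (card_le_card inter_subset_left) (card_le_card inter_subset_right)
  calc ∑ x ∈ S, G.degree x
      = ∑ y ∈ S, #(G.neighborFinset y ∩ S) + ∑ y ∈ Sᶜ, #(G.neighborFinset y ∩ S) := by
        rw [sum_degree_eq_sum_card_neighborFinset_inter, sum_add_sum_compl]
    _ ≤ #S * (#S - 1) + ∑ y ∈ Sᶜ, min (G.degree y) #S :=
        add_le_add (sum_le_card_nsmul S _ _ hmem) (sum_le_sum fun y _ => hmin y)

theorem sum_degree_le_card_mul_add_sum_degree_compl (S : Finset V) :
    ∑ x ∈ S, G.degree x ≤ #S * (#S - 1) + ∑ y ∈ Sᶜ, G.degree y :=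
  (erdos_gallai_inequality G S).trans <| by gcongr; exact min_le_left _ _

end ErdosGallai

variable {v : V}

theorem degree_eq_card_of_sum_degree_eq [DecidableEq V] {H : Finset V} (hv : v ∉ H)
    (hsum : ∑ x ∈ H, G.degree x = #H ^ 2 + ∑ x ∈ (insert v H)ᶜ, G.degree x) :
    G.degree v = #H := by
  have hH := sum_degree_le_card_mul_add_sum_degree_compl G H
  have hvH := sum_degree_le_card_mul_add_sum_degree_compl G (insert v H)
  rw [← insert_compl_insert hv, sum_insert (by simp)] at hH
  rw [sum_insert hv, card_insert_of_notMem hv, Nat.add_sub_cancel] at hvH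
  have hsq : #H ^ 2 = #H * (#H - 1) + #H := by
    cases #H with
    | zero => rfl
    | succ k => rw [Nat.add_sub_cancel]; ring
  apply le_antisymm <;> linarith

theorem bijOn_degree_compl_singleton (hpos : ∀ x, 0 < G.degree x)
    (hinj : Set.InjOn (G.degree ·) {v}ᶜ) :
    Set.BijOn (G.degree ·) {v}ᶜ (Set.Ico 1 (Fintype.card V)) := by
  classical
  have hmaps : Set.MapsTo (G.degree ·) ({v}ᶜ : Finset V) (Ico 1 (Fintype.card V)) := fun x _ =>
    mem_coe.2 <| mem_Ico.2 ⟨hpos x, G.degree_lt_card_verts x⟩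
  have hinj' : Set.InjOn (G.degree ·) ({v}ᶜ : Finset V) := by simpa using hinj
  have hsurj := surjOn_of_injOn_of_card_le (G.degree ·) hmaps hinj' (by simp [card_compl])
  simpa using Set.BijOn.mk hmaps hinj' hsurj

theorem degree_eq_card_div_two_of_bijOn
    (hbij : Set.BijOn (G.degree ·) {v}ᶜ (Set.Ico 1 (Fintype.card V))) :
    G.degree v = Fintype.card V / 2 := by
  classical
  set n := Fintype.card V
  have hn : 0 < n := Fintype.card_pos_iff.2 ⟨v⟩
  have hbij' : Set.BijOn (G.degree ·) ({v}ᶜ : Finset V) (Ico 1 n : Finset ℕ) := by simpa using hbij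
  have hupper : {d ∈ Ico 1 n | n - n / 2 ≤ d} = Ico (n - n / 2) n :=
    Ico_filter_le_of_left_le (by lia)
  have hlower : {d ∈ Ico 1 n | d < n - n / 2} = Ico 1 (n - n / 2) :=
    Ico_filter_lt_of_le_right (by lia)
  set H : Finset V := {x ∈ {v}ᶜ | n - n / 2 ≤ G.degree x}
  have hcompl : (insert v H)ᶜ = {x ∈ ({v}ᶜ : Finset V) | G.degree x < n - n / 2} := by
    ext x
    simp only [H, mem_compl, mem_insert, mem_filter, mem_singleton]
    grind
  have hcard : #H = n / 2 := by
    rw [card_eq_sum_ones, sum_filter_comp_of_bijOn hbij' (n - n / 2 ≤ ·) fun _ => 1, hupper,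
      ← card_eq_sum_ones, Nat.card_Ico]
    lia
  rw [← hcard]
  refine degree_eq_card_of_sum_degree_eq (by simp [H]) ?_
  rw [hcompl, sum_filter_comp_of_bijOn hbij' (n - n / 2 ≤ ·) fun d => d, hupper,
    sum_filter_comp_of_bijOn hbij' (· < n - n / 2) fun d => d, hlower, hcard, sum_Ico_sub_div_two,
    sum_range_eq_add_Ico _ (by lia), zero_add]

end Degree

theorem connected_almost_irregular_degrees_general {V : Type*} [Fintype V] (G : SimpleGraph V)
    (hpos : ∀ v, 0 < ndeg G v) (hai : AlmostIrregular G) :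
    {v : V | ndeg G v = Fintype.card V / 2}.ncard = 2 ∧
      ∀ d : ℕ, 1 ≤ d → d ≤ Fintype.card V - 1 → d ≠ Fintype.card V / 2 →
        {v : V | ndeg G v = d}.ncard = 1 := by
  classical
  have : Nontrivial V := hai.nontrivial
  have hn : 1 < Fintype.card V := Fintype.one_lt_card
  obtain ⟨v, hinj⟩ := hai.exists_injOn_compl_singleton
  have hndeg : ndeg G = (G.degree ·) := funext fun x => ndeg_eq_degree G x
  rw [hndeg] at hpos hinj ⊢
  have hbij := bijOn_degree_compl_singleton hpos hinj
  have hv := degree_eq_card_div_two_of_bijOn hbij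
  refine ⟨?_, fun d hd hdn hne => ?_⟩
  · rw [ncard_fiber_of_bijOn_compl_singleton hbij ⟨by lia, by lia⟩, if_pos hv]
  · rw [ncard_fiber_of_bijOn_compl_singleton hbij ⟨hd, by lia⟩, if_neg (hv ▸ hne.symm)]

/-- A connected almost irregular graph of order `n ≥ 2` contains exactly two vertices of
degree `⌊n/2⌋` and exactly one vertex of each degree in `{1, …, n-1} \ {⌊n/2⌋}`. -/
theorem connected_almost_irregular_degrees {V : Type*} [Fintype V] (G : SimpleGraph V)
    (hn : 2 ≤ Fintype.card V) (hconn : G.Connected) (hai : AlmostIrregular G) :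
    {v : V | ndeg G v = Fintype.card V / 2}.ncard = 2 ∧
      ∀ d : ℕ, 1 ≤ d → d ≤ Fintype.card V - 1 → d ≠ Fintype.card V / 2 →
        {v : V | ndeg G v = d}.ncard = 1 := by
  classical
  have : Nontrivial V := hai.nontrivial
  exact connected_almost_irregular_degrees_general G
    (fun v => ndeg_eq_degree G v ▸ hconn.preconnected.degree_pos_of_nontrivial v) hai
end
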